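/- If x : ℕ → Fin 2 is recurrent and pattern Sturmian (p*_x(n) = 2n for all n ≥ 1), then x is uniformly recurrent and either x is a simple circle rotation coding sequence, or there exists a 1-hole Toeplitz sequence z such that x lies in the orbit closure of z. (This is Theorem A of the paper with the conclusion 'nearly simple Toeplitz subshift' weakened to '1-hole Toeplitz subshift'; every nearly simple Toeplitz subshift is a 1-hole Toeplitz subshift.) -/

import Mathlib

open Set

abbrev Seq2 := ℕ → Fin 2

def patLang (x : Seq2) (τ : Finset ℕ) : Set ((s : τ) → Fin 2) :=
  {w | ∃ m : ℕ, ∀ s : τ, w s = x (m + (s : ℕ))}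

noncomputable def pstar (x : Seq2) (n : ℕ) : ℕ :=
  sSup {c : ℕ | ∃ τ : Finset ℕ, τ.card = n ∧ (patLang x τ).ncard = c}

def PatternSturmian (x : Seq2) : Prop := ∀ n : ℕ, 1 ≤ n → pstar x n = 2 * n

def Recurrent (x : Seq2) : Prop :=
  ∀ L : ℕ, ∃ M : ℕ, 1 ≤ M ∧ ∀ i < L, x i = x (M + i)

def Syndetic (S : Set ℕ) : Prop :=
  ∃ g : ℕ, ∀ n : ℕ, ∃ m ∈ S, n ≤ m ∧ m < n + g

def UniformlyRecurrent (x : Seq2) : Prop :=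
  ∀ L : ℕ, Syndetic {M : ℕ | 1 ≤ M ∧ ∀ i < L, x i = x (M + i)}

def orbitClosure (x : Seq2) : Set Seq2 :=
  closure {y : Seq2 | ∃ m : ℕ, y = fun n => x (m + n)}

abbrev T1 := AddCircle (1 : ℝ)

def IsArc (I : Set T1) : Prop :=
  ∃ a b : ℝ, b - a ≤ 1 ∧
    (I = (fun r : ℝ => (r : T1)) '' Set.Icc a b ∨
     I = (fun r : ℝ => (r : T1)) '' Set.Ico a b ∨
     I = (fun r : ℝ => (r : T1)) '' Set.Ioc a b ∨
     I = (fun r : ℝ => (r : T1)) '' Set.Ioo a b)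

/-- A simple circle rotation coding sequence: coding of an irrational rotation by a
partition of the circle into two disjoint nonempty intervals. -/
def SimpleCircleCoding (x : Seq2) : Prop :=
  ∃ (α : ℝ), Irrational α ∧ ∃ I : Fin 2 → Set T1,
    (∀ i, IsArc (I i)) ∧ (∀ i, (I i).Nonempty) ∧
    Disjoint (I 0) (I 1) ∧ I 0 ∪ I 1 = Set.univ ∧
    ∀ (n : ℕ) (i : Fin 2), x n = i ↔ (((n : ℝ) * α : ℝ) : T1) ∈ I i

def ToeplitzWith (nk : ℕ → ℕ) (z : Seq2) : Prop :=
  (∀ k, 1 ≤ nk k ∧ nk k ∣ nk (k + 1) ∧ nk k < nk (k + 1)) ∧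
  (∀ n : ℕ, ∃ k : ℕ, ∀ m : ℕ, m % nk k = n % nk k → z m = z n)

def MHoleToeplitz (m : ℕ) (z : Seq2) : Prop :=
  ∃ nk : ℕ → ℕ, ToeplitzWith nk z ∧
    ∀ k : ℕ,
      {j : ℕ | j < nk k ∧ ∃ m₁ m₂ : ℕ, m₁ % nk k = j ∧ m₂ % nk k = j ∧ z m₁ ≠ z m₂}.ncard = m

/-!
Since `p*_x(n) ≤ 2n`, every window extends to a saturated one, for which each further offset splits
at most two patterns. If `t` is a return time of every pattern on a saturated window, the positions
at which the shift by `t` changes a given letter at a given offset of the window therefore all show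
the same pattern through it. This rigidity forces bounded gaps, that is, uniform recurrence.

If no power of the shift has a nontrivial clopen invariant set, rigidity orders the nearby shifts of
`x` linearly and makes the density of `{m | x (m + a) ≠ x (m + b)}` additive along this order. As a
function of `a - b` this density is a norm on `ℤ` which is locally isometric to the line. Continuing
the local isometry along `ℤ` gives a monodromy `p`, and the norm becomes locally the distance of
`tα` to the integers, up to scale, with `α` irrational. Two letters cannot interlace on the circle,
so each of them occupies an arc.

Otherwise `x` determines the residues of its positions modulo some `q ≥ 2`, and `x` is periodic off
a single residue class, the hole. The sequence read along the hole inherits the hypotheses and again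
has a nontrivial clopen set invariant under some power of the shift: otherwise it would be coded by
a rotation, hence have a window of some size `n` with `2n` patterns missing a given constant one,
and spreading that window out along the hole adds the constant pattern, read in `x` along another
class. Iterating produces one-hole period structures with unbounded periods. At most one position
lies in all of the holes, and shifting past it turns `x` into a Toeplitz sequence.
-/

section Patterns

variable {x : Seq2} {V W : Finset ℕ} {k m n s t : ℕ}

/-- `x` shows the same pattern through the window `V` at the positions `m` and `n`. The classes of
this equivalence relation on positions are the atoms of `V`. -/
def Agree (x : Seq2) (V : Finset ℕ) (m n : ℕ) : Prop := ∀ s ∈ V, x (m + s) = x (n + s)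

/-- The words of length `L` of `x` at the positions `m` and `n` coincide. -/
abbrev SameWord (x : Seq2) (L m n : ℕ) : Prop := Agree x (Finset.range L) m n

/-- The pattern which `x` shows through the window `V` at the position `m`. -/
def patternAt (x : Seq2) (V : Finset ℕ) (m : ℕ) : V → Fin 2 := fun s => x (m + s)

/-- The offset `s` splits the `V`-pattern at `m`: this pattern extends to `V ∪ {s}` by both
letters. -/
def Splits (x : Seq2) (V : Finset ℕ) (s m : ℕ) : Prop :=
  ∃ m', Agree x V m m' ∧ x (m + s) ≠ x (m' + s)

/-- A window is saturated if every offset splits at most two of its patterns. -/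
def Saturated (x : Seq2) (V : Finset ℕ) : Prop :=
  ∀ s, (patternAt x V '' {m | Splits x V s m}).ncard ≤ 2

/-- The upper half of being pattern Sturmian: `p*_x(n) ≤ 2n`. -/
def LowComplexity (x : Seq2) : Prop :=
  ∀ V : Finset ℕ, V.Nonempty → (patLang x V).ncard ≤ 2 * V.card

lemma eq_of_ne_of_ne {a b c : Fin 2} (hab : a ≠ b) (hcb : c ≠ b) : a = c := by omega

namespace Agree

lemma refl (m : ℕ) : Agree x V m m := fun _ _ => rfl

lemma symm (h : Agree x V m n) : Agree x V n m := fun s hs => (h s hs).symm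

lemma trans (h : Agree x V m n) (h' : Agree x V n k) : Agree x V m k :=
  fun s hs => (h s hs).trans (h' s hs)

lemma mono (h : Agree x V m n) (hW : W ⊆ V) : Agree x W m n := fun s hs => h s (hW hs)

end Agree

lemma patternAt_eq_iff : patternAt x V m = patternAt x V n ↔ Agree x V m n :=
  ⟨fun h s hs => congrFun h ⟨s, hs⟩, fun h => funext fun s => h s s.2⟩

lemma patLang_eq_range (x : Seq2) (V : Finset ℕ) : patLang x V = range (patternAt x V) := by
  ext w
  exact exists_congr fun m => ⟨fun h => (funext h).symm, fun h s => (congrFun h s).symm⟩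

lemma sameWord_iff {L : ℕ} : SameWord x L m n ↔ ∀ i < L, x (m + i) = x (n + i) := by
  simp only [Agree, Finset.mem_range]

lemma SameWord.mono {L L' : ℕ} (h : SameWord x L m n) (hL : L' ≤ L) : SameWord x L' m n :=
  Agree.mono h (Finset.range_mono hL)

lemma SameWord.add {L L' : ℕ} (h : SameWord x L m n) (hk : k + L' ≤ L) :
    SameWord x L' (m + k) (n + k) := by
  rw [sameWord_iff] at *
  intro i hi
  simpa only [add_assoc] using h (k + i) (by omega)

lemma exists_forall_mem_lt (V : Finset ℕ) : ∃ M, ∀ s ∈ V, s < M :=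
  ⟨V.sup id + 1, fun _ hs => Nat.lt_succ_of_le (Finset.le_sup (f := id) hs)⟩

lemma SameWord.agree_add {L M : ℕ} (h : SameWord x L m n) (hM : ∀ s ∈ V, s < M)
    (hk : k + M ≤ L) : Agree x V (m + k) (n + k) :=
  Agree.mono (h.add hk) fun s hs => Finset.mem_range.mpr (hM s hs)

lemma exists_lt_agree (x : Seq2) (V : Finset ℕ) : ∃ K, ∀ m, ∃ r < K, Agree x V m r := by
  obtain ⟨R, hR⟩ := exists_forall_mem_lt ((Set.toFinite (range (patternAt x V))).toFinset.image
    (Function.invFun (patternAt x V)))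
  refine ⟨R, fun m => ⟨_, hR (Function.invFun (patternAt x V) (patternAt x V m)) ?_, ?_⟩⟩
  · exact Finset.mem_image_of_mem _ ((Set.Finite.mem_toFinset _).mpr (mem_range_self m))
  · exact patternAt_eq_iff.mp (Function.invFun_eq ⟨m, rfl⟩).symm

namespace Splits

lemma congr (h : Splits x V s m) (e : Agree x V m n) : Splits x V s n := by
  obtain ⟨m', hm', hne⟩ := h
  by_cases heq : x (n + s) = x (m + s)
  · exact ⟨m', e.symm.trans hm', by rwa [heq]⟩
  · exact ⟨m, e.symm, heq⟩

lemma notMem (h : Splits x V s m) : s ∉ V := by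
  obtain ⟨m', hm', hne⟩ := h
  exact fun hs => hne (hm' s hs)

end Splits

lemma image_patternAt_inter_eq (x : Seq2) (V : Finset ℕ) (s : ℕ) :
    patternAt x V '' {m | x (m + s) = 0} ∩ patternAt x V '' {m | x (m + s) = 1} =
      patternAt x V '' {m | Splits x V s m} := by
  ext w
  constructor
  · rintro ⟨⟨m, hm, rfl⟩, n, hn, hnm⟩
    refine ⟨m, ⟨n, patternAt_eq_iff.mp hnm.symm, ?_⟩, rfl⟩
    rw [hm, hn]
    exact zero_ne_one
  · rintro ⟨m, ⟨n, hmn, hne⟩, rfl⟩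
    have hnm := patternAt_eq_iff.mpr hmn.symm
    obtain ⟨hm, hn⟩ | ⟨hm, hn⟩ : x (m + s) = 0 ∧ x (n + s) = 1 ∨ x (m + s) = 1 ∧ x (n + s) = 0 := by
      omega
    · exact ⟨⟨m, hm, rfl⟩, n, hn, hnm⟩
    · exact ⟨⟨n, hn, hnm⟩, m, hm, rfl⟩

lemma ncard_image_patternAt_insert (x : Seq2) (V : Finset ℕ) (s : ℕ) (c : Fin 2) :
    (patternAt x (insert s V) '' {m | x (m + s) = c}).ncard =
      (patternAt x V '' {m | x (m + s) = c}).ncard := by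
  have hrestrict : patternAt x V '' {m | x (m + s) = c} =
      Finset.restrict₂ (π := fun _ => Fin 2) (Finset.subset_insert s V) ''
        (patternAt x (insert s V) '' {m | x (m + s) = c}) := by
    rw [image_image]
    rfl
  rw [hrestrict]
  refine (InjOn.ncard_image ?_).symm
  rintro _ ⟨m, hm, rfl⟩ _ ⟨n, hn, rfl⟩ hmn
  refine patternAt_eq_iff.mpr fun u hu => ?_
  rcases Finset.mem_insert.mp hu with rfl | hu
  · exact hm.trans hn.symm
  · exact congrFun hmn ⟨u, hu⟩

/-- The patterns on `V ∪ {s}` are counted by their letter at `s`. -/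
lemma ncard_patLang_insert (x : Seq2) (V : Finset ℕ) (s : ℕ) :
    (patLang x (insert s V)).ncard =
      (patLang x V).ncard + (patternAt x V '' {m | Splits x V s m}).ncard := by
  have hunion : ∀ W : Finset ℕ, patLang x W =
      patternAt x W '' {m | x (m + s) = 0} ∪ patternAt x W '' {m | x (m + s) = 1} := fun W => by
    rw [← image_union, patLang_eq_range, ← image_univ]
    exact congrArg _ (eq_univ_of_forall fun m => by
      change x (m + s) = 0 ∨ x (m + s) = 1
      omega).symm
  have hdisj : Disjoint (patternAt x (insert s V) '' {m | x (m + s) = 0})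
      (patternAt x (insert s V) '' {m | x (m + s) = 1}) := by
    rw [Set.disjoint_left]
    rintro _ ⟨m, hm, rfl⟩ ⟨n, hn, hnm⟩
    have := patternAt_eq_iff.mp hnm s (Finset.mem_insert_self s V)
    rw [hm, hn] at this
    exact one_ne_zero this
  rw [hunion (insert s V), ncard_union_eq hdisj, ncard_image_patternAt_insert,
    ncard_image_patternAt_insert, hunion V, ← image_patternAt_inter_eq, ncard_union_add_ncard_inter]

lemma Saturated.agree_of_splits (h : Saturated x V) {m₁ m₂ m₃ : ℕ} (h₁ : Splits x V s m₁)
    (h₂ : Splits x V s m₂) (h₃ : Splits x V s m₃) :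
    Agree x V m₁ m₂ ∨ Agree x V m₁ m₃ ∨ Agree x V m₂ m₃ := by
  by_contra! hne
  simp only [← patternAt_eq_iff] at hne
  exact (h s).not_gt ((two_lt_ncard (toFinite _)).mpr
    ⟨_, ⟨m₁, h₁, rfl⟩, _, ⟨m₂, h₂, rfl⟩, _, ⟨m₃, h₃, rfl⟩, hne⟩)

lemma exists_ncard_patLang_insert_of_not_saturated (h : ¬ Saturated x V) :
    ∃ s ∉ V, (patLang x V).ncard + 3 ≤ (patLang x (insert s V)).ncard := by
  unfold Saturated at h
  push Not at h
  obtain ⟨s, hs⟩ := h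
  obtain ⟨_, m, hm, rfl⟩ := nonempty_of_ncard_ne_zero (ne_zero_of_lt hs)
  exact ⟨s, hm.notMem, by rw [ncard_patLang_insert]; omega⟩

lemma LowComplexity.saturated_of_two_mul_card_le (hx : LowComplexity x)
    (hV : 2 * V.card ≤ (patLang x V).ncard) : Saturated x V := by
  by_contra h
  obtain ⟨s, hs, hcard⟩ := exists_ncard_patLang_insert_of_not_saturated h
  have := hx _ (Finset.insert_nonempty s V)
  rw [Finset.card_insert_of_notMem hs] at this
  omega

lemma LowComplexity.exists_saturated_superset (hx : LowComplexity x) (V : Finset ℕ) :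
    ∃ W, V ⊆ W ∧ Saturated x W := by
  by_contra! hV
  have grow : ∀ k, ∃ W, V ⊆ W ∧ W.card = V.card + k ∧ 3 * k ≤ (patLang x W).ncard := by
    intro k
    induction k with
    | zero => exact ⟨V, Subset.rfl, rfl, Nat.zero_le _⟩
    | succ k ih =>
      obtain ⟨W, hVW, hcard, hk⟩ := ih
      obtain ⟨s, hs, hle⟩ := exists_ncard_patLang_insert_of_not_saturated (hV W hVW)
      refine ⟨insert s W, hVW.trans (Finset.subset_insert _ _), ?_, by omega⟩
      rw [Finset.card_insert_of_notMem hs, hcard, add_assoc]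
  obtain ⟨W, _, hcard, hk⟩ := grow (2 * V.card + 1)
  have := hx W (Finset.card_pos.mp (by omega))
  omega

end Patterns

section PatternSturmian

variable {x : Seq2}

lemma bddAbove_ncard_patLang (x : Seq2) (n : ℕ) :
    BddAbove {c : ℕ | ∃ τ : Finset ℕ, τ.card = n ∧ (patLang x τ).ncard = c} := by
  refine ⟨2 ^ n, ?_⟩
  rintro c ⟨τ, hτ, rfl⟩
  calc (patLang x τ).ncard ≤ Nat.card (τ → Fin 2) := Set.ncard_le_card _
    _ = 2 ^ n := by simp [hτ]

namespace PatternSturmian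

lemma lowComplexity (h : PatternSturmian x) : LowComplexity x := by
  intro V hV
  rw [← h V.card (Finset.card_pos.mpr hV)]
  exact le_csSup (bddAbove_ncard_patLang x _) ⟨V, rfl, rfl⟩

lemma exists_ncard_patLang_eq (h : PatternSturmian x) {n : ℕ} (hn : 1 ≤ n) :
    ∃ V : Finset ℕ, V.card = n ∧ (patLang x V).ncard = 2 * n := by
  rw [← h n hn]
  exact Nat.sSup_mem (s := {c : ℕ | ∃ τ : Finset ℕ, τ.card = n ∧ (patLang x τ).ncard = c})
    ⟨_, Finset.range n, Finset.card_range n, rfl⟩ (bddAbove_ncard_patLang x n)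

/-- If `x` were `g`-periodic from `N` on, every window would show at most `N + g` patterns. -/
lemma exists_ge_ne (h : PatternSturmian x) {g : ℕ} (hg : 1 ≤ g) (N : ℕ) :
    ∃ m ≥ N, x m ≠ x (m + g) := by
  by_contra! hper
  obtain ⟨V, -, hcard⟩ := h.exists_ncard_patLang_eq (n := N + g) (by omega)
  have early : ∀ m, ∃ r < N + g, Agree x V r m := by
    intro m
    induction m using Nat.strong_induction_on with
    | _ m ih =>
      rcases lt_or_ge m (N + g) with hm | hm
      · exact ⟨m, hm, Agree.refl m⟩
      · obtain ⟨r, hr, hrm⟩ := ih (m - g) (by omega)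
        refine ⟨r, hr, hrm.trans fun s _ => ?_⟩
        rw [hper _ (by omega)]
        congr 1
        omega
  have hsub : patLang x V ⊆ patternAt x V '' (Finset.range (N + g)) := by
    rw [patLang_eq_range]
    rintro _ ⟨m, rfl⟩
    obtain ⟨r, hr, hrm⟩ := early m
    exact ⟨r, by simpa using hr, patternAt_eq_iff.mpr hrm⟩
  have := (ncard_le_ncard hsub).trans (ncard_image_le (Finset.finite_toSet _))
  rw [ncard_coe_finset, Finset.card_range] at this
  omega

end PatternSturmian

end PatternSturmian

/-! ### Return times and bounded gaps -/

section Recurrence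

variable {x y : Seq2} {V : Finset ℕ} {m n s t : ℕ}

/-- The number `t` is a return time of every pattern of `x` on `V`. -/
def IsReturn (x : Seq2) (V : Finset ℕ) (t : ℕ) : Prop :=
  ∀ m, ∃ m', Agree x V m m' ∧ Agree x V m' (m' + t)

/-- Every difference `g ≥ 1` is seen in `x` with bounded gaps: there are no arbitrarily long
stretches of `x` with period `g`. -/
def NoLongPeriod (x : Seq2) : Prop := ∀ g ≥ 1, ∃ G, ∀ a, ∃ i < G, x (a + i) ≠ x (a + i + g)

/-- The sums `n k` of successively chosen return times; the return time of step `k` is chosen for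
words which are longer than the partial sum `n k`. -/
lemma Recurrent.exists_strictMono_sameWord_sub (hx : Recurrent x) (L : ℕ) :
    ∃ n : ℕ → ℕ, StrictMono n ∧ ∀ i j, i ≤ j → SameWord x L 0 (n j - n i) := by
  choose R hR_pos hR using fun A => hx (L + A)
  let n : ℕ → ℕ := Nat.rec 0 fun _ p => p + R p
  have hn : ∀ k, n (k + 1) = n k + R (n k) := fun _ => rfl
  have hmono : StrictMono n := strictMono_nat_of_lt_succ fun k => by
    have := hR_pos (n k)
    rw [hn]
    omega
  have return_sum : ∀ i j, i ≤ j → SameWord x (L + n i) 0 (n j - n i) := by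
    intro i j hij
    induction j, hij using Nat.le_induction with
    | base => simpa using Agree.refl 0
    | succ j hij ih =>
      rw [sameWord_iff] at ih ⊢
      intro k hk
      have hle := hmono.monotone hij
      rw [ih k hk, hR (n j) _ (by omega), hn]
      congr 1
      omega
  exact ⟨n, hmono, fun i j hij => (return_sum i j hij).mono (Nat.le_add_right _ _)⟩

lemma Recurrent.exists_dvd_sameWord (hx : Recurrent x) (L B : ℕ) {g : ℕ} (hg : 1 ≤ g) :
    ∃ t ≥ B, g ∣ t ∧ SameWord x L 0 t := by
  obtain ⟨n, hn, hret⟩ := hx.exists_strictMono_sameWord_sub L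
  obtain ⟨r, hr⟩ := Finite.exists_infinite_fiber
    fun k => (⟨n k % g, Nat.mod_lt _ hg⟩ : Fin g)
  have hfiber := Set.infinite_coe_iff.mp hr
  obtain ⟨i, hi, -⟩ := hfiber.exists_gt 0
  obtain ⟨j, hj, hij⟩ := hfiber.exists_gt (i + B)
  have hgap : B + n i ≤ n j :=
    (hn.add_le_nat B i).trans (hn.monotone (by omega))
  refine ⟨n j - n i, by omega, (Nat.modEq_iff_dvd' (by omega)).mp ?_, hret i j (by omega)⟩
  exact congrArg Fin.val (hi.trans hj.symm)

lemma Recurrent.exists_isReturn (hx : Recurrent x) (V : Finset ℕ) (L B : ℕ) {g : ℕ} (hg : 1 ≤ g) :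
    ∃ t ≥ B, g ∣ t ∧ IsReturn x V t ∧ SameWord x L 0 t := by
  obtain ⟨M, hM⟩ := exists_forall_mem_lt V
  obtain ⟨K, hK⟩ := exists_lt_agree x V
  obtain ⟨t, hB, hgt, ht⟩ := hx.exists_dvd_sameWord (L + K + M) B hg
  refine ⟨t, hB, hgt, fun m => ?_, ht.mono (by omega)⟩
  obtain ⟨r, hr, hmr⟩ := hK m
  have := ht.agree_add (k := r) hM (by omega)
  rw [zero_add, add_comm] at this
  exact ⟨r, hmr, this⟩

lemma IsReturn.splits (h : IsReturn x V t) (hs : s ∈ V) (hne : x (m + s) ≠ x (m + s + t)) :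
    Splits x V (s + t) m := by
  obtain ⟨m', hmm', ht⟩ := h m
  refine ⟨m', hmm', ?_⟩
  rw [← add_assoc, ← add_assoc, add_right_comm m' s t, ← ht s hs, ← hmm' s hs]
  exact hne.symm

lemma imp_add_mul_of_imp_add {b : ℕ → Prop} (h : ∀ m, b m → b (m + t)) (hm : b m) (k : ℕ) :
    b (m + k * t) := by
  induction k with
  | zero => simpa using hm
  | succ k ih => simpa only [add_mul, one_mul, add_assoc] using h _ ih

/-- Where the pattern at `m` recurs, its letters determine those at the offsets `s + t`, which
again form the pattern at `m`. -/
lemma IsReturn.agree_add_mul (h : IsReturn x V t) (hns : ∀ s ∈ V, ¬ Splits x V (s + t) m) (k : ℕ) :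
    Agree x V m (m + k * t) := by
  obtain ⟨m', hmm', ht⟩ := h m
  refine imp_add_mul_of_imp_add (fun n hn s hs => ?_) (Agree.refl m) k
  by_contra hne
  refine hns s hs (Splits.congr ⟨n, hmm'.symm.trans hn, fun heq => hne ?_⟩ hmm'.symm)
  rw [hmm' s hs, ht s hs, add_right_comm, add_assoc, heq]
  congr 1
  omega

lemma mem_orbitClosure_iff : y ∈ orbitClosure x ↔ ∀ L, ∃ a, ∀ i < L, x (a + i) = y i := by
  rw [orbitClosure, (PiNat.isTopologicalBasis_cylinders _).mem_closure_iff]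
  constructor
  · intro h L
    obtain ⟨_, hz, a, rfl⟩ := h _ ⟨y, L, rfl⟩ (PiNat.self_mem_cylinder y L)
    exact ⟨a, PiNat.mem_cylinder_iff.mp hz⟩
  · rintro h _ ⟨z, L, rfl⟩ hy
    obtain ⟨a, ha⟩ := h L
    rw [PiNat.mem_cylinder_iff] at hy
    exact ⟨_, PiNat.mem_cylinder_iff.mpr fun i hi => (ha i hi).trans (hy i hi), a, rfl⟩

lemma exists_mem_orbitClosure_forall_rel (x : Seq2) (r : Fin 2 → Fin 2 → Prop) (t : ℕ)
    (h : ∀ G, ∃ a, ∀ i < G, r (x (a + i)) (x (a + i + t))) :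
    ∃ y ∈ orbitClosure x, ∀ i, r (y i) (y (i + t)) := by
  let C : ℕ → Set Seq2 := fun G => orbitClosure x ∩ {y | ∀ i < G, r (y i) (y (i + t))}
  have hclosed : ∀ G, IsClosed (C G) := fun G => by
    refine isClosed_closure.inter ?_
    simp only [ofPred_forall]
    refine isClosed_iInter fun i => isClosed_iInter fun _ => ?_
    exact (isClosed_discrete {p : Fin 2 × Fin 2 | r p.1 p.2}).preimage
      (f := fun y : Seq2 => (y i, y (i + t)))
      ((continuous_apply i).prodMk (continuous_apply (i + t)))
  have hne : ∀ G, (C G).Nonempty := fun G => by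
    obtain ⟨a, ha⟩ := h G
    refine ⟨fun n => x (a + n), subset_closure ⟨a, rfl⟩, fun i hi => ?_⟩
    simpa only [add_assoc] using ha i hi
  obtain ⟨y, hy⟩ := IsCompact.nonempty_iInter_of_sequence_nonempty_isCompact_isClosed C
    (fun G y hy => ⟨hy.1, fun i hi => hy.2 i (hi.trans (Nat.lt_succ_self G))⟩) hne
    (hclosed 0).isCompact hclosed
  rw [mem_iInter] at hy
  exact ⟨y, (hy 0).1, fun i => (hy (i + 1)).2 i (Nat.lt_succ_self i)⟩

end Recurrence

section UniformRecurrence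

variable {x y : Seq2} {V : Finset ℕ} {m n s t g : ℕ}

/-- A stretch of `x` which follows the periodic sequence `y` ends at some position `m + s + t`;
at `m` the window `V` still shows a pattern of `y`. -/
lemma IsReturn.exists_splits_of_periodic (ht : IsReturn x V t) (hgt : g ∣ t)
    (hVt : ∀ s ∈ V, s < t) (hx : ∀ N, ∃ m ≥ N, x m ≠ x (m + g)) (hy : Function.Periodic y g)
    (hmem : y ∈ orbitClosure x) (hs : s ∈ V) :
    ∃ m, patternAt x V m ∈ range (patternAt y V) ∧ Splits x V (s + t) m := by
  obtain ⟨a, ha⟩ := mem_orbitClosure_iff.mp hmem (s + t)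
  have hleave : ∃ b, x (a + b) ≠ y b := by
    by_contra! h
    obtain ⟨m, hm, hne⟩ := hx a
    obtain ⟨i, rfl⟩ := Nat.exists_eq_add_of_le hm
    rw [add_assoc, h, h, hy] at hne
    exact hne rfl
  classical
  let b := Nat.find hleave
  have hb : x (a + b) ≠ y b := Nat.find_spec hleave
  have hfollow : ∀ i < b, x (a + i) = y i := fun i hi => not_not.mp (Nat.find_min hleave hi)
  obtain ⟨c, hc⟩ : ∃ c, b = c + s + t := by
    refine ⟨b - (s + t), ?_⟩
    have : ¬ b < s + t := fun hlt => hb (ha b hlt)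
    omega
  have hshow : ∀ i ∈ V, x (a + c + i) = y (c + i) := fun i hi => by
    rw [add_assoc, hfollow _ (by have := hVt i hi; omega)]
  refine ⟨a + c, ⟨c, funext fun i => (hshow i i.2).symm⟩, ht.splits hs fun heq => hb ?_⟩
  obtain ⟨k, rfl⟩ := hgt
  rw [hc, show a + (c + s + g * k) = a + c + s + g * k by ring, ← heq, hshow s hs, mul_comm]
  exact (hy.nat_mul k _).symm

/-- If no offset `s + t` split the pattern at `m`, it would recur along a progression of difference
`t`, which meets every long stretch of `x` that follows `y`. -/
lemma IsReturn.exists_splits_of_notMem_range (ht : IsReturn x V t) (ht0 : 0 < t)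
    (hmem : y ∈ orbitClosure x) (hm : patternAt x V m ∉ range (patternAt y V)) :
    ∃ s ∈ V, Splits x V (s + t) m := by
  by_contra! hns
  obtain ⟨M, hM⟩ := exists_forall_mem_lt V
  obtain ⟨a, ha⟩ := mem_orbitClosure_iff.mp hmem (m + t + M)
  have hpos : m + (a / t + 1) * t = a + (m + t - a % t) := by
    have := Nat.div_add_mod' a t
    have := Nat.mod_lt a ht0
    rw [add_mul]
    omega
  refine hm ⟨m + t - a % t, funext fun i => ?_⟩
  have := hM i i.2
  calc y (m + t - a % t + i) = x (a + (m + t - a % t + i)) := (ha _ (by omega)).symm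
    _ = x (m + (a / t + 1) * t + i) := by rw [hpos, add_assoc]
    _ = x (m + i) := (ht.agree_add_mul hns _ i i.2).symm

lemma ncard_range_patternAt_le_of_periodic (hy : Function.Periodic y g) (hg : 1 ≤ g)
    (V : Finset ℕ) : (range (patternAt y V)).ncard ≤ g := by
  have hsub : range (patternAt y V) ⊆ patternAt y V '' (Finset.range g) := by
    rintro _ ⟨m, rfl⟩
    refine ⟨m % g, by simpa using Nat.mod_lt m hg, patternAt_eq_iff.mpr fun s _ => ?_⟩
    rw [← hy.map_mod_nat, ← hy.map_mod_nat (m + s), Nat.mod_add_mod]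
  calc _ ≤ _ := ncard_le_ncard hsub
    _ ≤ _ := ncard_image_le (Finset.finite_toSet _)
    _ = g := by rw [ncard_coe_finset, Finset.card_range]

/-- Otherwise some `g`-periodic `y` lies in the orbit closure. A window `V` of size `g + 1` with
`2(g + 1)` patterns shows at most `g` patterns of `y`, and for a suitable return time `t` each of
the other patterns is split by some `s + t` with `s ∈ V`. As every `s + t` also splits a pattern of
`y`, by saturation it splits at most one other pattern, so there are too few of them. -/
theorem PatternSturmian.noLongPeriod (hrec : Recurrent x) (hx : PatternSturmian x) :
    NoLongPeriod x := by
  intro g hg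
  by_contra! hlong
  obtain ⟨y, hmem, hy⟩ := exists_mem_orbitClosure_forall_rel x (fun u v => v = u) g
    fun G => (hlong G).imp fun a ha i hi => (ha i hi).symm
  obtain ⟨V, hVcard, hV⟩ := hx.exists_ncard_patLang_eq (n := g + 1) (by omega)
  have hsat : Saturated x V := hx.lowComplexity.saturated_of_two_mul_card_le (by omega)
  obtain ⟨M, hM⟩ := exists_forall_mem_lt V
  obtain ⟨t, htM, hgt, ht, -⟩ := hrec.exists_isReturn V 0 (M + 1) hg
  have hsplit : ∀ w ∈ patLang x V \ range (patternAt y V), ∃ s ∈ V, ∃ m,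
      patternAt x V m = w ∧ Splits x V (s + t) m := by
    rw [patLang_eq_range]
    rintro _ ⟨⟨m, rfl⟩, hm⟩
    obtain ⟨s, hs, h⟩ := ht.exists_splits_of_notMem_range (by omega) hmem hm
    exact ⟨s, hs, m, rfl, h⟩
  choose! f hfV q hq hfq using hsplit
  have hinj : InjOn f (patLang x V \ range (patternAt y V)) := by
    intro w hw w' hw' hww'
    obtain ⟨p, hp, hsp⟩ := ht.exists_splits_of_periodic hgt (fun s hs => by
      have := hM s hs; omega) (hx.exists_ge_ne hg) hy hmem (hfV w hw)
    rcases hsat.agree_of_splits (hfq w hw) (hww' ▸ hfq w' hw') hsp with h | h | h <;>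
      rw [← patternAt_eq_iff] at h
    · rw [← hq w hw, h, hq w' hw']
    · exact absurd (hq w hw ▸ h ▸ hp) hw.2
    · exact absurd (hq w' hw' ▸ h ▸ hp) hw'.2
  have hother : (patLang x V \ range (patternAt y V)).ncard ≤ g + 1 := by
    rw [← hVcard, ← ncard_coe_finset]
    exact ncard_le_ncard_of_injOn f hfV hinj V.finite_toSet
  have hper := ncard_range_patternAt_le_of_periodic hy hg V
  have := le_ncard_sdiff (range (patternAt y V)) (patLang x V)
  omega

/-- Otherwise some `y` in the orbit closure never loses the letter `v` along a progression of
difference `t`. Then it is eventually constant along each of them, hence eventually `t`-periodic. -/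
lemma NoLongPeriod.exists_leave (hx : NoLongPeriod x) (ht : 1 ≤ t) (v : Fin 2) :
    ∃ G, ∀ a, ∃ i < G, x (a + i) = v ∧ x (a + i + t) ≠ v := by
  by_contra! hstay
  obtain ⟨y, hmem, hy⟩ := exists_mem_orbitClosure_forall_rel x (fun u w => u = v → w = v) t hstay
  have hconst : ∀ r, ∃ N, ∀ k ≥ N, y (r + k * t + t) = y (r + k * t) := by
    intro r
    by_cases hr : ∃ k, y (r + k * t) = v
    · obtain ⟨N, hN⟩ := hr
      have hv : ∀ k ≥ N, y (r + k * t) = v := fun k hk => by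
        have := imp_add_mul_of_imp_add (b := fun n => y n = v) hy hN (k - N)
        rwa [add_assoc, ← add_mul, Nat.add_sub_cancel' hk] at this
      exact ⟨N, fun k hk => (hy _ (hv k hk)).trans (hv k hk).symm⟩
    · push Not at hr
      refine ⟨0, fun k _ => eq_of_ne_of_ne (b := v) ?_ (hr k)⟩
      simpa only [add_mul, one_mul, add_assoc] using hr (k + 1)
  choose N hN using hconst
  obtain ⟨G, hG⟩ := hx t ht
  let B := (Finset.range t).sup N
  obtain ⟨a, ha⟩ := mem_orbitClosure_iff.mp hmem (B * t + G + t)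
  obtain ⟨i, hi, hne⟩ := hG (a + B * t)
  rw [add_assoc a, add_assoc a, ha _ (by omega), ha _ (by omega)] at hne
  have hdm := Nat.mod_add_div' (B * t + i) t
  rw [← hdm] at hne
  refine hne (hN _ _ ?_).symm
  calc N ((B * t + i) % t) ≤ B := Finset.le_sup (by simpa using Nat.mod_lt _ ht)
    _ ≤ (B * t + i) / t := (Nat.le_div_iff_mul_le ht).mpr (Nat.le_add_right _ _)

/-- If some word at `0` does not return with bounded gaps, neither does its extension to a saturated
window `V`. For a return time `t` some `s + t` splits the pattern at `0`, but by aperiodicity it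
also splits two patterns which differ at `s` inside any long stretch avoiding the pattern at `0`. -/
theorem PatternSturmian.uniformlyRecurrent (hrec : Recurrent x) (hx : PatternSturmian x) :
    UniformlyRecurrent x := by
  intro L
  by_contra hgaps
  unfold Syndetic at hgaps
  push Not at hgaps
  obtain ⟨V, hLV, hsat⟩ := hx.lowComplexity.exists_saturated_superset (Finset.range L)
  have havoid : ∀ G, ∃ a, ∀ i < G, ¬ Agree x V 0 (a + i) := by
    intro G
    obtain ⟨n, hn⟩ := hgaps (G + 1)
    refine ⟨n + 1, fun i hi he => ?_⟩
    have hword : ∀ j < L, x j = x (n + 1 + i + j) := by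
      simpa only [zero_add] using sameWord_iff.mp (he.mono hLV)
    exact (hn (n + 1 + i) ⟨by omega, hword⟩ (by omega)).not_gt (by omega)
  obtain ⟨t, ht1, -, ht, -⟩ := hrec.exists_isReturn V 0 1 le_rfl
  have hns : ∀ s ∈ V, ¬ Splits x V (s + t) 0 := by
    intro s hs hsplit
    have hleave : ∀ v, ∃ m, ¬ Agree x V 0 m ∧ x (m + s) = v ∧ Splits x V (s + t) m := by
      intro v
      obtain ⟨G, hG⟩ := (hx.noLongPeriod hrec).exists_leave ht1 v
      obtain ⟨a, ha⟩ := havoid G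
      obtain ⟨i, hi, hv, hne⟩ := hG (a + s)
      rw [add_right_comm a s i] at hv hne
      exact ⟨a + i, ha i hi, hv, ht.splits hs (hv ▸ hne.symm)⟩
    obtain ⟨m₀, h0₀, hv₀, hs₀⟩ := hleave 0
    obtain ⟨m₁, h0₁, hv₁, hs₁⟩ := hleave 1
    rcases hsat.agree_of_splits hsplit hs₀ hs₁ with h | h | h
    · exact h0₀ h
    · exact h0₁ h
    · have := h s hs
      rw [hv₀, hv₁] at this
      exact zero_ne_one this
  obtain ⟨a, ha⟩ := havoid (t + 1)
  have hpos : 0 + (a / t + 1) * t = a + (t - a % t) := by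
    have := Nat.div_add_mod' a t
    have := Nat.mod_lt a ht1
    rw [add_mul]
    omega
  exact ha (t - a % t) (by omega) (hpos ▸ ht.agree_add_mul hns (a / t + 1))

end UniformRecurrence

section Tame

variable {x : Seq2} {V : Finset ℕ} {m n s t : ℕ}

/-- The properties of `x` from which the dichotomy is derived. Unlike being pattern Sturmian, they
pass to the subsequence along the hole of a `OneHole` structure. -/
structure Tame (x : Seq2) : Prop where
  uniformlyRecurrent : UniformlyRecurrent x
  aperiodic : ∀ g ≥ 1, ∃ m, x m ≠ x (m + g)
  lowComplexity : LowComplexity x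

/-- The property `b` of positions is determined by the words of `x` of some fixed length. -/
def IsLocal (x : Seq2) (b : ℕ → Prop) : Prop :=
  ∃ N, ∀ m n, SameWord x N m n → (b m ↔ b n)

/-- No power of the shift has a nontrivial clopen invariant set. -/
def TotallyMinimal (x : Seq2) : Prop :=
  ∀ b, IsLocal x b → ∀ t ≥ 1, (∀ m, b m → b (m + t)) → (∀ m, b m) ∨ (∀ m, ¬ b m)

/-- The words of `x` of length `N` determine the residue of their position modulo `q`. -/
def Recognizes (x : Seq2) (q N : ℕ) : Prop := ∀ m n, SameWord x N m n → m % q = n % q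

lemma Recognizes.of_forall_dvd {q N : ℕ} (h : ∀ m d, SameWord x N m (m + d) → q ∣ d) :
    Recognizes x q N := by
  intro m n he
  rcases le_total m n with hmn | hmn <;> obtain ⟨d, rfl⟩ := Nat.exists_eq_add_of_le hmn
  · exact (Nat.modEq_iff_dvd' hmn).mpr (by simpa using h m d he)
  · exact ((Nat.modEq_iff_dvd' hmn).mpr (by simpa using h n d he.symm)).symm

lemma PatternSturmian.tame (hrec : Recurrent x) (hx : PatternSturmian x) : Tame x where
  uniformlyRecurrent := hx.uniformlyRecurrent hrec
  aperiodic _ hg := let ⟨m, _, hm⟩ := hx.exists_ge_ne hg 0; ⟨m, hm⟩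
  lowComplexity := hx.lowComplexity

namespace UniformlyRecurrent

lemma recurrent (h : UniformlyRecurrent x) : Recurrent x := fun L =>
  let ⟨_, hg⟩ := h L
  let ⟨m, hm, _⟩ := hg 0
  ⟨m, hm⟩

lemma exists_lt_agree_add (h : UniformlyRecurrent x) (V : Finset ℕ) :
    ∃ K, ∀ m a, ∃ i < K, Agree x V (a + i) m := by
  obtain ⟨M, hM⟩ := exists_forall_mem_lt V
  obtain ⟨R, hR⟩ := exists_lt_agree x V
  obtain ⟨g, hg⟩ := h (R + M)
  refine ⟨g + R, fun m a => ?_⟩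
  obtain ⟨r, hr, hmr⟩ := hR m
  obtain ⟨n, ⟨-, hn⟩, han, hng⟩ := hg a
  have hword : SameWord x (R + M) n 0 :=
    sameWord_iff.mpr fun i hi => by rw [zero_add, hn i hi]
  refine ⟨n + r - a, by omega, ?_⟩
  rw [Nat.add_sub_cancel' (by omega)]
  have := hword.agree_add (k := r) hM (by omega)
  rw [zero_add] at this
  exact this.trans hmr.symm

end UniformlyRecurrent

namespace IsLocal

lemma of_agree (V : Finset ℕ) {b : ℕ → Prop} (h : ∀ m n, Agree x V m n → b m → b n) :
    IsLocal x b := by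
  obtain ⟨M, hM⟩ := exists_forall_mem_lt V
  have agree : ∀ m n, SameWord x M m n → Agree x V m n := fun m n he =>
    Agree.mono he fun s hs => Finset.mem_range.mpr (hM s hs)
  exact ⟨M, fun m n he => ⟨h _ _ (agree _ _ he), h _ _ (agree _ _ he).symm⟩⟩

lemma periodic_of_imp_add (hx : Recurrent x) {b : ℕ → Prop} (hb : IsLocal x b) (ht : 1 ≤ t)
    (h : ∀ m, b m → b (m + t)) : Function.Periodic b t := by
  obtain ⟨N, hN⟩ := hb
  refine fun m => propext ⟨fun hm => ?_, h m⟩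
  obtain ⟨_, hr, ⟨k, rfl⟩, hword⟩ := hx.exists_dvd_sameWord (m + N) t ht
  obtain ⟨j, rfl⟩ : ∃ j, k = j + 1 :=
    ⟨k - 1, by have := Nat.pos_of_mul_pos_left (ht.trans hr); omega⟩
  have hreturn := hword.add (k := m) le_rfl
  rw [zero_add] at hreturn
  refine (hN _ _ hreturn).mpr ?_
  convert imp_add_mul_of_imp_add h hm j using 1
  ring

end IsLocal

section Periodic

variable {β : Type*} {f : ℕ → β} {q d : ℕ}

lemma periodic_of_forall_lt_eq (hf : Function.Periodic f q) (hq : 0 < q)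
    (h : ∀ i < q, f (m + i) = f (m + d + i)) : Function.Periodic f d := by
  have shift : ∀ n, Function.Periodic (fun i => f (n + i)) q := fun n i => by
    simpa only [add_assoc] using hf (n + i)
  have hall : ∀ i, f (m + i) = f (m + d + i) := fun i => by
    rw [← (shift m).map_mod_nat i, ← (shift (m + d)).map_mod_nat i]
    exact h _ (Nat.mod_lt _ hq)
  intro k
  have hmq : m ≤ m * q := Nat.le_mul_of_pos_right m hq
  have := hall (k + m * q - m)
  rw [show m + (k + m * q - m) = k + m * q by omega,
    show m + d + (k + m * q - m) = k + d + m * q by omega] at this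
  exact ((hf.nat_mul m (k + d)).symm.trans this.symm).trans (hf.nat_mul m k)

lemma dvd_of_periodic_of_minimal (hf : Function.Periodic f q) (hq : 0 < q)
    (hmin : ∀ r, 0 < r → Function.Periodic f r → q ≤ r) (hd : Function.Periodic f d) : q ∣ d := by
  refine Nat.dvd_of_mod_eq_zero (Nat.eq_zero_of_not_pos fun hpos => ?_)
  refine (hmin _ hpos fun k => ?_).not_gt (Nat.mod_lt _ hq)
  have := hf.nat_mul (d / q) (k + d % q)
  rw [Nat.cast_id, add_assoc, Nat.mod_add_div'] at this
  exact this.symm.trans (hd k)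

end Periodic

/-- The least period of a nontrivial clopen set which is invariant under some power of the shift
is recognized. -/
lemma exists_recognizes_of_not_totallyMinimal (hx : Recurrent x) (h : ¬ TotallyMinimal x) :
    ∃ q N, 2 ≤ q ∧ Recognizes x q N := by
  classical
  unfold TotallyMinimal at h
  push Not at h
  obtain ⟨b, hb, t, ht, hinv, ⟨m₀, hm₀⟩, ⟨m₁, hm₁⟩⟩ := h
  have hex : ∃ q, 0 < q ∧ Function.Periodic b q := ⟨t, ht, hb.periodic_of_imp_add hx ht hinv⟩
  obtain ⟨q, ⟨hq, hper⟩, hmin⟩ : ∃ q, (0 < q ∧ Function.Periodic b q) ∧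
      ∀ r, 0 < r → Function.Periodic b r → q ≤ r :=
    ⟨_, Nat.find_spec hex, fun r hr hr' => Nat.find_min' hex ⟨hr, hr'⟩⟩
  obtain ⟨N, hN⟩ := hb
  have hword : ∀ m d, SameWord x (N + q) m (m + d) → q ∣ d := fun m d he =>
    dvd_of_periodic_of_minimal hper hq hmin <| periodic_of_forall_lt_eq hper hq fun i hi =>
      propext (hN _ _ (he.add (by omega)))
  refine ⟨q, N + q, ?_, .of_forall_dvd hword⟩
  by_contra hlt
  obtain rfl : q = 1 := by omega
  have hconst : ∀ m, b m ↔ b 0 := fun m => by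
    rw [← hper.map_mod_nat m, Nat.mod_one]
  exact hm₀ ((hconst m₀).mpr ((hconst m₁).mp hm₁))

namespace Tame

lemma noLongPeriod (h : Tame x) : NoLongPeriod x := by
  intro g hg
  obtain ⟨m, hm⟩ := h.aperiodic g hg
  obtain ⟨K, hK⟩ := h.uniformlyRecurrent.exists_lt_agree_add {0, g}
  refine ⟨K, fun a => ?_⟩
  obtain ⟨i, hi, hmi⟩ := hK m a
  refine ⟨i, hi, ?_⟩
  rw [hmi g (by simp), ← add_zero (a + i), hmi 0 (by simp)]
  exact hm

lemma exists_ge_leave (h : Tame x) (ht : 1 ≤ t) (v : Fin 2) (s a : ℕ) :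
    ∃ m ≥ a, x (m + s) = v ∧ x (m + s + t) ≠ v := by
  obtain ⟨G, hG⟩ := h.noLongPeriod.exists_leave ht v
  obtain ⟨i, -, hi⟩ := hG (a + s)
  rw [add_right_comm a s i] at hi
  exact ⟨a + i, by omega, hi⟩

/-- The window at `s + t` splits all patterns in which the letter at `s` changes under `t`, and
both letters occur there. -/
lemma agree_of_leave (h : Tame x) (hV : Saturated x V) (ht : 1 ≤ t) (hr : IsReturn x V t)
    (hs : s ∈ V) {v : Fin 2} (hm : x (m + s) = v) (hmt : x (m + s + t) ≠ v)
    (hn : x (n + s) = v) (hnt : x (n + s + t) ≠ v) : Agree x V m n := by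
  obtain ⟨w, hw⟩ := exists_ne v
  obtain ⟨k, -, hk, hkt⟩ := h.exists_ge_leave ht w s 0
  rcases hV.agree_of_splits (hr.splits hs (hm ▸ hmt.symm)) (hr.splits hs (hn ▸ hnt.symm))
    (hr.splits hs (hk ▸ hkt.symm)) with e | e | e
  · exact e
  · exact absurd ((hk.symm.trans (e s hs).symm).trans hm) hw
  · exact absurd ((hk.symm.trans (e s hs).symm).trans hn) hw

lemma exists_isReturn_of_sameWord (h : Tame x) (V : Finset ℕ) :
    ∃ K, ∀ t m, SameWord x K m (m + t) → IsReturn x V t := by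
  obtain ⟨M, hM⟩ := exists_forall_mem_lt V
  obtain ⟨K, hK⟩ := h.uniformlyRecurrent.exists_lt_agree_add V
  refine ⟨K + M, fun t m hm n => ?_⟩
  obtain ⟨i, hi, hni⟩ := hK n m
  refine ⟨m + i, hni.symm, ?_⟩
  rw [add_right_comm]
  exact hm.agree_add hM (by omega)

end Tame

end Tame

/-! ### Density of sets of positions -/

section Density

open Filter Topology

variable {S T : Set ℕ} {k K R : ℕ}

/-- The proportion of the first `N + 1` natural numbers which lie in `S`. -/
noncomputable def proportion (S : Set ℕ) (N : ℕ) : ℝ :=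
  (∑ m ∈ Finset.range (N + 1), S.indicator 1 m) / (N + 1)

/-- The density of `S` along a fixed free ultrafilter: a shift-invariant finitely additive
probability measure which is defined on all sets of natural numbers. -/
noncomputable def density (S : Set ℕ) : ℝ := limUnder (hyperfilter ℕ : Filter ℕ) (proportion S)

lemma proportion_mem_Icc (S : Set ℕ) (N : ℕ) : proportion S N ∈ Icc (0 : ℝ) 1 := by
  have hN : (0 : ℝ) < N + 1 := by positivity
  refine ⟨div_nonneg (Finset.sum_nonneg fun m _ => indicator_nonneg (by simp) m) hN.le, ?_⟩
  rw [proportion, div_le_one hN]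
  calc ∑ m ∈ Finset.range (N + 1), S.indicator (1 : ℕ → ℝ) m
      ≤ ∑ m ∈ Finset.range (N + 1), 1 :=
        Finset.sum_le_sum fun m _ => indicator_le_self' (by simp) m
    _ = N + 1 := by simp

lemma tendsto_proportion (S : Set ℕ) :
    Tendsto (proportion S) (hyperfilter ℕ) (𝓝 (density S)) := by
  have hIcc : ∀ᶠ N in hyperfilter ℕ, proportion S N ∈ Icc (0 : ℝ) 1 :=
    Eventually.of_forall (proportion_mem_Icc S)
  obtain ⟨l, -, hl⟩ := isCompact_Icc.ultrafilter_le_nhds ((hyperfilter ℕ).map (proportion S))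
    (le_principal_iff.mpr hIcc)
  exact tendsto_nhds_limUnder ⟨l, hl⟩

lemma density_nonneg (S : Set ℕ) : 0 ≤ density S :=
  ge_of_tendsto' (tendsto_proportion S) fun N => (proportion_mem_Icc S N).1

lemma density_univ : density univ = 1 := by
  refine tendsto_nhds_unique (tendsto_proportion univ) (tendsto_const_nhds.congr fun N => ?_)
  have hN : (N : ℝ) + 1 ≠ 0 := by positivity
  simp [proportion, hN]

lemma density_union (h : Disjoint S T) : density (S ∪ T) = density S + density T := by
  refine tendsto_nhds_unique (tendsto_proportion _)
    (((tendsto_proportion S).add (tendsto_proportion T)).congr fun N => ?_)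
  simp only [proportion, indicator_union_of_disjoint h, Finset.sum_add_distrib, add_div]

lemma density_succ_mem (S : Set ℕ) : density {m | m + 1 ∈ S} = density S := by
  have hdiff : ∀ N, ‖proportion {m | m + 1 ∈ S} N - proportion S N‖ ≤ 1 / ((N : ℝ) + 1) := by
    intro N
    have hshift : ∀ m, indicator {m | m + 1 ∈ S} (1 : ℕ → ℝ) m = S.indicator 1 (m + 1) :=
      fun _ => rfl
    have htel := (Finset.sum_range_succ' (S.indicator (1 : ℕ → ℝ)) (N + 1)).symm.trans
      (Finset.sum_range_succ _ _)
    have hmem : ∀ m, S.indicator (1 : ℕ → ℝ) m ∈ Icc (0 : ℝ) 1 := fun m =>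
      ⟨indicator_nonneg (by simp) m, indicator_le_self' (by simp) m⟩
    have hN : (0 : ℝ) < N + 1 := by positivity
    simp only [proportion, hshift]
    rw [← sub_div, Real.norm_eq_abs, abs_div, abs_of_pos hN]
    gcongr
    rw [abs_le]
    constructor <;> linarith [(hmem 0).1, (hmem 0).2, (hmem (N + 1)).1, (hmem (N + 1)).2]
  have hzero := (squeeze_zero_norm hdiff tendsto_one_div_add_atTop_nhds_zero_nat).mono_left
    Nat.hyperfilter_le_atTop
  exact sub_eq_zero.mp
    (tendsto_nhds_unique ((tendsto_proportion _).sub (tendsto_proportion S)) hzero)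

lemma density_add_mem (S : Set ℕ) (k : ℕ) : density {m | m + k ∈ S} = density S := by
  induction k with
  | zero => rfl
  | succ k ih =>
    rw [← ih, ← density_succ_mem {m | m + k ∈ S}]
    simp only [mem_ofPred_eq, add_assoc, add_comm 1]

lemma density_mono (h : S ⊆ T) : density S ≤ density T := by
  rw [← union_sdiff_cancel h, density_union disjoint_sdiff_right]
  exact le_add_of_nonneg_right (density_nonneg _)

lemma density_empty : density ∅ = 0 := by
  simpa using density_union (disjoint_empty (∅ : Set ℕ))

lemma density_union_add_inter (S T : Set ℕ) :
    density (S ∪ T) + density (S ∩ T) = density S + density T := by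
  have hdisj : Disjoint S (T \ S) := disjoint_sdiff_right
  have hunion := density_union hdisj
  have hT := density_union (hdisj.mono_left (inter_subset_left (t := T)))
  rw [union_sdiff_self] at hunion
  rw [inter_comm, inter_union_sdiff, inter_comm] at hT
  linarith

lemma density_union_le (S T : Set ℕ) : density (S ∪ T) ≤ density S + density T :=
  density_union_add_inter S T ▸ le_add_of_nonneg_right (density_nonneg _)

lemma exists_lt_succ_add_mem (S : Set ℕ) (k : ℕ) :
    {m | ∃ i < k + 1, m + i ∈ S} = {m | ∃ i < k, m + i ∈ S} ∪ {m | m + k ∈ S} := by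
  ext m
  simp only [Nat.lt_succ_iff_lt_or_eq, or_and_right, exists_or, exists_eq_left, mem_union,
    mem_ofPred_eq]

lemma density_exists_lt_add_mem_le (S : Set ℕ) (k : ℕ) :
    density {m | ∃ i < k, m + i ∈ S} ≤ k * density S := by
  induction k with
  | zero => simp [density_empty]
  | succ k ih =>
    rw [exists_lt_succ_add_mem]
    have := density_union_le {m | ∃ i < k, m + i ∈ S} {m | m + k ∈ S}
    rw [density_add_mem] at this
    push_cast
    linarith

lemma density_pos_of_forall_exists_lt (h : ∀ a, ∃ i < K, a + i ∈ S) : 0 < density S := by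
  refine (density_nonneg S).lt_of_ne' fun h0 => ?_
  have hcover : {m | ∃ i < K, m + i ∈ S} = univ := eq_univ_of_forall h
  have := density_exists_lt_add_mem_le S K
  rw [hcover, density_univ, h0] at this
  linarith

lemma density_exists_lt_add_mem (h : ∀ m ∈ S, ∀ n ∈ S, m < n → R ≤ n - m) (hk : k ≤ R) :
    density {m | ∃ i < k, m + i ∈ S} = k * density S := by
  induction k with
  | zero => simp [density_empty]
  | succ k ih =>
    rw [exists_lt_succ_add_mem, density_union, density_add_mem, ih (by omega)]
    · push_cast
      ring
    · refine Set.disjoint_left.mpr ?_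
      rintro m ⟨i, hi, hmi⟩ hmk
      have := h _ hmi _ hmk (by omega)
      omega

lemma mul_density_le_one (h : ∀ m ∈ S, ∀ n ∈ S, m < n → R ≤ n - m) : R * density S ≤ 1 := by
  rw [← density_exists_lt_add_mem h le_rfl, ← density_univ]
  exact density_mono (subset_univ _)

lemma Tame.density_pos {x : Seq2} (h : Tame x) {b : ℕ → Prop} (hb : IsLocal x b) {m : ℕ}
    (hm : b m) : 0 < density {n | b n} := by
  obtain ⟨N, hN⟩ := hb
  obtain ⟨K, hK⟩ := h.uniformlyRecurrent.exists_lt_agree_add (Finset.range N)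
  refine density_pos_of_forall_exists_lt (K := K) fun a => ?_
  obtain ⟨i, hi, he⟩ := hK m a
  exact ⟨i, hi, (hN _ _ he).mpr hm⟩

end Density

section Mismatch

variable {x : Seq2} {V W : Finset ℕ} {a b c t : ℕ}

/-- The density of the places where the sequences `σᵃ x` and `σᵇ x` differ. It is a shift-invariant
metric on the offsets. -/
noncomputable def mismatch (x : Seq2) (a b : ℕ) : ℝ := density {m | x (m + a) ≠ x (m + b)}

lemma mismatch_nonneg (x : Seq2) (a b : ℕ) : 0 ≤ mismatch x a b := density_nonneg _

lemma mismatch_self (x : Seq2) (a : ℕ) : mismatch x a a = 0 := by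
  simp [mismatch, density_empty]

lemma mismatch_comm (x : Seq2) (a b : ℕ) : mismatch x a b = mismatch x b a := by
  simp only [mismatch, ne_comm]

lemma mismatch_add_right (x : Seq2) (a b k : ℕ) :
    mismatch x (a + k) (b + k) = mismatch x a b := by
  rw [mismatch, mismatch, ← density_add_mem {m | x (m + a) ≠ x (m + b)} k]
  simp only [mem_ofPred_eq, add_assoc, add_comm k]

lemma mismatch_add_mismatch (x : Seq2) (a b c : ℕ) :
    mismatch x a b + mismatch x b c =
      mismatch x a c + 2 * density {m | x (m + a) = x (m + c) ∧ x (m + b) ≠ x (m + a)} := by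
  let D : Set ℕ := {m | x (m + a) = x (m + c) ∧ x (m + b) ≠ x (m + a)}
  have hinter : {m | x (m + a) ≠ x (m + b)} ∩ {m | x (m + b) ≠ x (m + c)} = D := by
    ext m
    simp only [mem_inter_iff, mem_ofPred_eq, D]
    omega
  have hunion : {m | x (m + a) ≠ x (m + b)} ∪ {m | x (m + b) ≠ x (m + c)} =
      {m | x (m + a) ≠ x (m + c)} ∪ D := by
    ext m
    simp only [mem_union, mem_ofPred_eq, D]
    omega
  have hdisj : Disjoint {m | x (m + a) ≠ x (m + c)} D :=
    Set.disjoint_left.mpr fun m hm hD => hm hD.1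
  rw [mismatch, mismatch, ← density_union_add_inter, hinter, hunion, density_union hdisj, mismatch]
  ring

lemma mismatch_triangle (x : Seq2) (a b c : ℕ) :
    mismatch x a c ≤ mismatch x a b + mismatch x b c := by
  rw [mismatch_add_mismatch]
  linarith [density_nonneg {m | x (m + a) = x (m + c) ∧ x (m + b) ≠ x (m + a)}]

lemma mismatch_eq_add_of_forall
    (h : ∀ m, ¬ (x (m + a) = x (m + c) ∧ x (m + b) ≠ x (m + a))) :
    mismatch x a c = mismatch x a b + mismatch x b c := by
  rw [mismatch_add_mismatch]
  simp [h, density_empty]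

namespace Tame

lemma forall_of_mismatch_eq_add (hx : Tame x) (h : mismatch x a c = mismatch x a b + mismatch x b c)
    (m : ℕ) : ¬ (x (m + a) = x (m + c) ∧ x (m + b) ≠ x (m + a)) := by
  intro hm
  have hpos := hx.density_pos (m := m)
    (b := fun m => x (m + a) = x (m + c) ∧ x (m + b) ≠ x (m + a))
    (.of_agree {a, b, c} fun m n he hm => by
      rwa [← he a (by simp), ← he b (by simp), ← he c (by simp)]) hm
  rw [mismatch_add_mismatch] at h
  linarith

lemma exists_leave_of_ne (hx : Tame x) (hab : a ≠ b) (v : Fin 2) :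
    ∃ m, x (m + a) = v ∧ x (m + b) ≠ v := by
  rcases hab.lt_or_gt with hlt | hlt <;> obtain ⟨d, rfl⟩ := Nat.exists_eq_add_of_lt hlt
  · obtain ⟨m, -, hm⟩ := hx.exists_ge_leave (Nat.le_add_left 1 d) v a 0
    rw [add_assoc m] at hm
    exact ⟨m, hm⟩
  · obtain ⟨w, hw⟩ := exists_ne v
    obtain ⟨m, -, hb, ha⟩ := hx.exists_ge_leave (Nat.le_add_left 1 d) w b 0
    rw [add_assoc m] at ha
    exact ⟨m, eq_of_ne_of_ne ha hw.symm, hb ▸ hw⟩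

lemma exists_ne_of_ne (hx : Tame x) (hab : a ≠ b) : ∃ m, x (m + a) ≠ x (m + b) :=
  let ⟨m, ha, hb⟩ := hx.exists_leave_of_ne hab 0
  ⟨m, ha ▸ hb.symm⟩

lemma mismatch_pos (hx : Tame x) (hab : a ≠ b) : 0 < mismatch x a b := by
  obtain ⟨m, hm⟩ := hx.exists_ne_of_ne hab
  exact hx.density_pos (m := m) (b := fun m => x (m + a) ≠ x (m + b))
    (.of_agree {a, b} fun m n he hm => by rwa [← he a (by simp), ← he b (by simp)]) hm

lemma density_letter_pos (hx : Tame x) (v : Fin 2) : 0 < density {m | x m = v} := by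
  obtain ⟨m, -, hm, -⟩ := hx.exists_ge_leave le_rfl v 0 0
  exact hx.density_pos (m := m) (b := fun m => x m = v)
    (.of_agree {0} fun m n he hm => (he 0 (by simp)).symm.trans hm) hm

/-- Half of the smaller letter density will do. -/
lemma exists_common_letter_of_mismatch_lt (hx : Tame x) :
    ∃ κ > 0, ∀ a b c, mismatch x a b < κ → mismatch x a c < κ →
      ∀ v, ∃ m, x (m + a) = v ∧ x (m + b) = v ∧ x (m + c) = v := by
  refine ⟨min (density {m | x m = 0}) (density {m | x m = 1}) / 2,
    half_pos (lt_min (hx.density_letter_pos 0) (hx.density_letter_pos 1)), ?_⟩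
  intro a b c hab hac v
  by_contra! hnone
  have hsub : {m | m + a ∈ {m | x m = v}} ⊆
      {m | x (m + a) ≠ x (m + b)} ∪ {m | x (m + a) ≠ x (m + c)} := by
    intro m (hm : x (m + a) = v)
    by_cases hb : x (m + b) = v
    · exact .inr fun h => hnone m hm hb (h ▸ hm)
    · exact .inl fun h => hb (h ▸ hm)
  have hle := (density_mono hsub).trans (density_union_le _ _)
  rw [density_add_mem] at hle
  have hv : min (density {m | x m = 0}) (density {m | x m = 1}) ≤ density {m | x m = v} := by
    match v with
    | 0 => exact min_le_left _ _
    | 1 => exact min_le_right _ _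
  unfold mismatch at hab hac
  linarith

end Tame

end Mismatch

section Lead

variable {x : Seq2} {V W : Finset ℕ} {a b c t : ℕ}

/-- The offset `a` is ahead of the offset `b` under `σᵗ`: the letter at `a` is lost when that at `b`
is still the same, and the letter at `b` is lost when that at `a` is already the other one. -/
def Lead (x : Seq2) (t a b : ℕ) : Prop :=
  ∀ m, (x (m + a) ≠ x (m + a + t) → x (m + b) = x (m + a)) ∧
    (x (m + b) ≠ x (m + b + t) → x (m + a) ≠ x (m + b))

lemma TotallyMinimal.not_of_forall_eq (hx : TotallyMinimal x) (ht : 1 ≤ t) {p : ℕ → Prop}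
    (V : Finset ℕ) (hloc : ∀ m n, Agree x V m n → p m → p n)
    (hstuck : ∀ m, p m → ∀ s ∈ V, x (m + s) = x (m + s + t)) (hp : ∃ m, ¬ p m) (m : ℕ) : ¬ p m := by
  obtain ⟨m₀, hm₀⟩ := hp
  refine (hx p (.of_agree V hloc) t ht fun m hm => hloc m _ (fun s hs => ?_) hm).resolve_left
    (fun h => hm₀ (h m₀)) m
  rw [add_right_comm]
  exact hstuck m hm s hs

lemma forall_eq_or_forall_ne {f g : Fin 2 → Fin 2} (h : ∀ v w, f v = w ∨ g w = v) :
    (∀ v, f v = v ∧ g v ≠ v) ∨ (∀ v, f v ≠ v ∧ g v = v) := by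
  revert f g
  decide

namespace Tame

/-- When the letter at `a` is lost, the letter at `b` is determined, and vice versa. By total
minimality each pair of letters loses one of its members. -/
lemma lead_or_lead (hx : Tame x) (hmin : TotallyMinimal x) (hV : Saturated x V) (ht : 1 ≤ t)
    (hr : IsReturn x V t) (ha : a ∈ V) (hb : b ∈ V) (hab : a ≠ b)
    (hcommon : ∀ v, ∃ m, x (m + a) = v ∧ x (m + b) = v) : Lead x t a b ∨ Lead x t b a := by
  have hpair : ∀ v w, ∃ m, x (m + a) = v ∧ x (m + b) = w := by
    intro v w
    rcases eq_or_ne w v with rfl | hvw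
    · exact hcommon w
    · obtain ⟨m, ha, hb⟩ := hx.exists_leave_of_ne hab v
      exact ⟨m, ha, eq_of_ne_of_ne hb hvw⟩
  have hdet : ∀ s ∈ V, ∀ s' ∈ V, ∃ f : Fin 2 → Fin 2,
      ∀ m, x (m + s) ≠ x (m + s + t) → x (m + s') = f (x (m + s)) := by
    intro s hs s' hs'
    choose n hn hn_lost using fun v => (hx.exists_ge_leave ht v s 0).imp fun m hm => hm.2
    exact ⟨fun v => x (n v + s'), fun m hm =>
      hx.agree_of_leave hV ht hr hs rfl hm.symm (hn _) (hn_lost _) s' hs'⟩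
  obtain ⟨f, hf⟩ := hdet a ha b hb
  obtain ⟨g, hg⟩ := hdet b hb a ha
  have hlost : ∀ v w, f v = w ∨ g w = v := by
    intro v w
    by_contra! hne
    obtain ⟨m, hm⟩ := hpair v w
    obtain ⟨v', hv'⟩ := exists_ne v
    refine hmin.not_of_forall_eq ht (p := fun m => x (m + a) = v ∧ x (m + b) = w) {a, b} ?_ ?_
      ((hpair v' w).imp fun n hn h => hv' (hn.1.symm.trans h.1)) m hm
    · intro m n he hm
      rwa [← he a (by simp), ← he b (by simp)]
    · rintro m ⟨hma, hmb⟩ s hs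
      by_contra hs_lost
      rcases Finset.mem_insert.mp hs with rfl | hs
      · exact hne.1 (by rw [← hma, ← hf m hs_lost, hmb])
      · rw [Finset.mem_singleton.mp hs] at hs_lost
        exact hne.2 (by rw [← hmb, ← hg m hs_lost, hma])
  rcases forall_eq_or_forall_ne hlost with h | h
  · exact .inl fun m => ⟨fun hm => (hf m hm).trans (h _).1, fun hm => hg m hm ▸ (h _).2⟩
  · exact .inr fun m => ⟨fun hm => (hg m hm).trans (h _).2, fun hm => hf m hm ▸ (h _).1⟩

lemma mismatch_eq_add_of_lead (hx : Tame x) (hmin : TotallyMinimal x) (ht : 1 ≤ t) (hac : a ≠ c)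
    (hab : Lead x t a b) (hbc : Lead x t b c) (hlead : Lead x t a c) :
    mismatch x a c = mismatch x a b + mismatch x b c := by
  refine mismatch_eq_add_of_forall <| hmin.not_of_forall_eq ht {a, b, c} ?_ ?_
    ((hx.exists_ne_of_ne hac).imp fun m hm h => hm h.1)
  · intro m n he hm
    rwa [← he a (by simp), ← he b (by simp), ← he c (by simp)]
  · rintro m ⟨hma, hmb⟩ s hs
    by_contra hs_lost
    simp only [Finset.mem_insert, Finset.mem_singleton] at hs
    rcases hs with rfl | rfl | rfl
    · exact hmb ((hab m).1 hs_lost)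
    · exact hmb (hma.trans ((hbc m).1 hs_lost)).symm
    · exact (hlead m).2 hs_lost hma

lemma not_lead_cycle (hx : Tame x) (hmin : TotallyMinimal x) (ht : 1 ≤ t) (hac : a ≠ c)
    (hab : Lead x t a b) (hbc : Lead x t b c) {v : Fin 2}
    (h : ∃ m, x (m + a) = v ∧ x (m + b) = v ∧ x (m + c) = v) : ¬ Lead x t c a := by
  intro hca
  obtain ⟨m, hma, hmb, hmc⟩ := h
  refine hmin.not_of_forall_eq ht (p := fun m => x (m + a) = x (m + b) ∧ x (m + b) = x (m + c))
    {a, b, c} ?_ ?_ ((hx.exists_ne_of_ne hac).imp fun m hm h => hm (h.1.trans h.2)) m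
    ⟨hma.trans hmb.symm, hmb.trans hmc.symm⟩
  · intro m n he hm
    rwa [← he a (by simp), ← he b (by simp), ← he c (by simp)]
  · rintro m ⟨hmab, hmbc⟩ s hs
    by_contra hs_lost
    simp only [Finset.mem_insert, Finset.mem_singleton] at hs
    rcases hs with rfl | rfl | rfl
    · exact (hca m).2 hs_lost (hmab.trans hmbc).symm
    · exact (hab m).2 hs_lost hmab
    · exact (hbc m).2 hs_lost hmbc

lemma exists_lead_total (hx : Tame x) (hmin : TotallyMinimal x) (hW : W.Nonempty)
    (hcommon : ∀ a ∈ W, ∀ b ∈ W, ∀ c ∈ W, ∃ m, x (m + a) = 0 ∧ x (m + b) = 0 ∧ x (m + c) = 0)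
    (hcommon' : ∀ a ∈ W, ∀ b ∈ W, ∃ m, x (m + a) = 1 ∧ x (m + b) = 1) :
    ∃ t ≥ 1, (∀ a ∈ W, ∀ b ∈ W, a ≠ b → Lead x t a b ∨ Lead x t b a) ∧
      ∃ e ∈ W, ∀ a ∈ W, a ≠ e → Lead x t e a := by
  obtain ⟨V, hWV, hV⟩ := hx.lowComplexity.exists_saturated_superset W
  obtain ⟨t, ht, -, hr, -⟩ := hx.uniformlyRecurrent.recurrent.exists_isReturn V 0 1 le_rfl
  have htotal : ∀ a ∈ W, ∀ b ∈ W, a ≠ b → Lead x t a b ∨ Lead x t b a := by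
    intro a ha b hb hab
    refine hx.lead_or_lead hmin hV ht hr (hWV ha) (hWV hb) hab (Fin.forall_fin_two.mpr ⟨?_, ?_⟩)
    · exact (hcommon a ha a ha b hb).imp fun m hm => hm.2
    · exact hcommon' a ha b hb
  refine ⟨t, ht, htotal, ?_⟩
  let r : W → W → Prop := fun a b => a = b ∨ Lead x t b a
  have : IsTrans W r := ⟨by
    rintro a b c (rfl | hba) (rfl | hcb)
    · exact .inl rfl
    · exact .inr hcb
    · exact .inr hba
    · rcases eq_or_ne a c with hac | hac
      · exact .inl hac
      · have hca : (c : ℕ) ≠ a := fun h => hac (Subtype.ext h.symm)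
        exact .inr ((htotal c c.2 a a.2 hca).resolve_right
          (hx.not_lead_cycle hmin ht hca hcb hba (hcommon c c.2 b b.2 a a.2)))⟩
  have hdir : Directed r id := by
    intro a b
    rcases eq_or_ne a b with rfl | hab
    · exact ⟨a, .inl rfl, .inl rfl⟩
    · rcases htotal a a.2 b b.2 (Subtype.coe_injective.ne hab) with h | h
      · exact ⟨a, .inl rfl, .inr h⟩
      · exact ⟨b, .inr h, .inl rfl⟩
  have : Nonempty W := hW.to_subtype
  obtain ⟨e, he⟩ := hdir.finset_le Finset.univ
  exact ⟨e, e.2, fun a ha hae => (he ⟨a, ha⟩ (Finset.mem_univ _)).resolve_left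
    fun h => hae (congrArg Subtype.val h)⟩

/-- Small sets of offsets are ordered by `Lead`, and the metric is additive along this order. -/
lemma exists_linear_mismatch (hx : Tame x) (hmin : TotallyMinimal x) :
    ∃ κ > 0, ∀ W : Finset ℕ, (∀ a ∈ W, ∀ b ∈ W, mismatch x a b < κ) →
      ∃ f : ℕ → ℝ, ∀ a ∈ W, ∀ b ∈ W, |f a - f b| = mismatch x a b := by
  obtain ⟨κ, hκ, hcommon⟩ := hx.exists_common_letter_of_mismatch_lt
  refine ⟨κ, hκ, fun W hW => ?_⟩
  rcases W.eq_empty_or_nonempty with rfl | hne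
  · exact ⟨0, by simp⟩
  obtain ⟨t, ht, htotal, e, he, hlead⟩ := hx.exists_lead_total hmin hne
    (fun a ha b hb c hc => hcommon a b c (hW a ha b hb) (hW a ha c hc) 0)
    (fun a ha b hb => (hcommon a a b (hW a ha a ha) (hW a ha b hb) 1).imp fun m hm => hm.2)
  have hadd : ∀ a ∈ W, ∀ b ∈ W, a ≠ e → b ≠ e → Lead x t a b →
      |mismatch x e a - mismatch x e b| = mismatch x a b := by
    intro a ha b hb hae hbe hab
    rw [hx.mismatch_eq_add_of_lead hmin ht hbe.symm (hlead a ha hae) hab (hlead b hb hbe),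
      sub_add_cancel_left, abs_neg, abs_of_nonneg (mismatch_nonneg _ _ _)]
  refine ⟨mismatch x e, fun a ha b hb => ?_⟩
  rcases eq_or_ne a b with rfl | hab
  · simp [mismatch_self]
  rcases eq_or_ne a e with rfl | hae
  · simp [mismatch_self, mismatch_nonneg]
  rcases eq_or_ne b e with rfl | hbe
  · simp [mismatch_self, mismatch_nonneg, mismatch_comm]
  rcases htotal a ha b hb hab with h | h
  · exact hadd a ha b hb hae hbe h
  · rw [abs_sub_comm, mismatch_comm x a b]
    exact hadd b hb a ha hbe hae h

end Tame

end Lead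

/-! ### Locally linear norms and their continuation -/

section ShiftNorm

variable {x : Seq2}

lemma TotallyMinimal.not_recognizes (hx : TotallyMinimal x) {q N : ℕ} (hq : 2 ≤ q) :
    ¬ Recognizes x q N := by
  intro h
  rcases hx (fun m => q ∣ m) ⟨N, fun m n he => Nat.ModEq.dvd_iff (h m n he) dvd_rfl⟩ q (by omega)
    (fun m hm => (Nat.dvd_add_self_right).mpr hm) with hall | hnone
  · exact absurd (Nat.le_of_dvd one_pos (hall 1)) (by omega)
  · exact hnone 0 (dvd_zero q)

/-- Finite sets of diameter less than `κ` embed isometrically into the real line. -/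
def LocallyLinear {G : Type*} [AddGroup G] (ρ : AddGroupNorm G) (κ : ℝ) : Prop :=
  ∀ W : Finset G, (∀ a ∈ W, ∀ b ∈ W, ρ (a - b) < κ) →
    ∃ f : G → ℝ, ∀ a ∈ W, ∀ b ∈ W, |f a - f b| = ρ (a - b)

namespace Tame

lemma exists_lt_sub_of_sameWord (hx : Tame x) (R : ℕ) :
    ∃ N, ∀ m n, SameWord x N m n → m < n → R < n - m := by
  choose! G hG using hx.noLongPeriod
  refine ⟨(Finset.range (R + 1)).sup G, fun m n he hmn => ?_⟩
  by_contra hle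
  obtain ⟨i, hi, hne⟩ := hG (n - m) (by omega) m
  have hGle : G (n - m) ≤ (Finset.range (R + 1)).sup G :=
    Finset.le_sup (Finset.mem_range.mpr (by omega))
  refine hne ((sameWord_iff.mp he i (hi.trans_le hGle)).trans ?_)
  congr 1
  omega

lemma exists_density_sameWord_lt (hx : Tame x) {ε : ℝ} (hε : 0 < ε) :
    ∃ N, ∀ m, density {n | SameWord x N m n} < ε := by
  obtain ⟨R, hR⟩ := exists_nat_gt (1 / ε)
  obtain ⟨N, hN⟩ := hx.exists_lt_sub_of_sameWord R
  refine ⟨N, fun m => lt_of_mul_lt_mul_left ?_ R.cast_nonneg⟩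
  refine (mul_density_le_one fun a ha b hb hab => (hN a b (ha.symm.trans hb) hab).le).trans_lt ?_
  rwa [div_lt_iff₀ hε] at hR

/-- If `t` is a return time of a large window, then the places where the letter changes under `t`
are covered by two small cylinders. -/
lemma exists_mismatch_lt_of_sameWord (hx : Tame x) {ε : ℝ} (hε : 0 < ε) :
    ∃ K, ∀ t m, SameWord x K m (m + t) → mismatch x 0 t < ε := by
  obtain ⟨N, hN⟩ := hx.exists_density_sameWord_lt (half_pos hε)
  obtain ⟨V, hNV, hV⟩ := hx.lowComplexity.exists_saturated_superset (insert 0 (Finset.range N))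
  obtain ⟨K, hK⟩ := hx.exists_isReturn_of_sameWord V
  refine ⟨K, fun t m he => ?_⟩
  rcases Nat.eq_zero_or_pos t with rfl | ht
  · rwa [mismatch_self]
  choose n _ hn hnt using fun v => hx.exists_ge_leave ht v 0 0
  have hcover : {k | x (k + 0) ≠ x (k + t)} ⊆
      {k | SameWord x N (n 0) k} ∪ {k | SameWord x N (n 1) k} := by
    intro k (hk : x (k + 0) ≠ x (k + t))
    have hsame : ∀ v, x (k + 0) = v → SameWord x N (n v) k := fun v hv =>
      (hx.agree_of_leave hV ht (hK t m he) (hNV (Finset.mem_insert_self 0 _)) (hn v) (hnt v) hv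
        (hv ▸ hk.symm)).mono ((Finset.subset_insert _ _).trans hNV)
    obtain hv | hv : x (k + 0) = 0 ∨ x (k + 0) = 1 := by omega
    exacts [.inl (hsame 0 hv), .inr (hsame 1 hv)]
  have := (density_mono hcover).trans (density_union_le _ _)
  unfold mismatch
  linarith [hN (n 0), hN (n 1)]

lemma mismatch_eq_of_sub_eq_sub {a b c d : ℕ} (h : (a : ℤ) - b = c - d) :
    mismatch x a b = mismatch x c d := by
  rw [← mismatch_add_right x a b d, ← mismatch_add_right x c d b]
  rw [show a + d = c + b by omega, add_comm b d]

/-- The mismatch of `σᵃ x` and `σᵇ x` as a function of the integer `a - b`. -/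
noncomputable def shiftNorm (hx : Tame x) : AddGroupNorm ℤ where
  toFun t := mismatch x t.toNat (-t).toNat
  map_zero' := mismatch_self x _
  neg' t := by rw [neg_neg, mismatch_comm]
  add_le' s t := by
    rw [mismatch_eq_of_sub_eq_sub (a := s.toNat) (c := s.toNat + t.toNat)
        (d := (-s).toNat + t.toNat) (by push_cast; omega),
      mismatch_eq_of_sub_eq_sub (a := t.toNat) (c := (-s).toNat + t.toNat)
        (d := (-s).toNat + (-t).toNat) (by push_cast; omega),
      mismatch_eq_of_sub_eq_sub (c := s.toNat + t.toNat) (d := (-s).toNat + (-t).toNat)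
        (by push_cast; omega)]
    exact mismatch_triangle x _ _ _
  eq_zero_of_map_eq_zero' t ht := by
    by_contra hne
    exact (hx.mismatch_pos (by omega)).ne' ht

lemma shiftNorm_sub (hx : Tame x) (a b : ℕ) : hx.shiftNorm (a - b) = mismatch x a b :=
  mismatch_eq_of_sub_eq_sub (by omega)

lemma exists_shiftNorm_lt (hx : Tame x) {ε : ℝ} (hε : 0 < ε) :
    ∃ t : ℤ, t ≠ 0 ∧ hx.shiftNorm t < ε := by
  obtain ⟨K, hK⟩ := hx.exists_mismatch_lt_of_sameWord hε
  obtain ⟨t, ht, -, he⟩ := hx.uniformlyRecurrent.recurrent.exists_dvd_sameWord K 1 (le_refl 1)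
  refine ⟨t, by omega, ?_⟩
  have := hK t 0 (by rwa [zero_add])
  rw [mismatch_comm, ← hx.shiftNorm_sub] at this
  simpa using this

lemma closure_shiftNorm_lt (hx : Tame x) (hmin : TotallyMinimal x) {ε : ℝ} (hε : 0 < ε) :
    AddSubgroup.closure {t : ℤ | hx.shiftNorm t < ε} = ⊤ := by
  obtain ⟨g, hg⟩ := Int.subgroup_cyclic (AddSubgroup.closure {t : ℤ | hx.shiftNorm t < ε})
  have hdvd : ∀ t, hx.shiftNorm t < ε → g ∣ t := fun t ht => by
    have hmem : t ∈ AddSubgroup.closure {t : ℤ | hx.shiftNorm t < ε} :=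
      AddSubgroup.subset_closure ht
    rwa [hg, ← AddSubgroup.zmultiples_eq_closure, Int.mem_zmultiples_iff] at hmem
  obtain ⟨K, hK⟩ := hx.exists_mismatch_lt_of_sameWord hε
  have hword : ∀ m d, SameWord x K m (m + d) → g.natAbs ∣ d := fun m d he => by
    have := hdvd (0 - d) (by simpa using (hx.shiftNorm_sub 0 d).trans_lt (hK d m he))
    simpa [Int.natAbs_dvd_natAbs] using Int.natAbs_dvd_natAbs.mpr this
  have hg0 : g ≠ 0 := by
    rintro rfl
    obtain ⟨t, ht0, ht⟩ := hx.exists_shiftNorm_lt hε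
    exact ht0 (zero_dvd_iff.mp (hdvd t ht))
  have hg1 : ¬ 2 ≤ g.natAbs := fun h => hmin.not_recognizes h (.of_forall_dvd hword)
  refine (AddSubgroup.eq_top_iff' _).mpr fun t => ?_
  rw [hg, ← AddSubgroup.zmultiples_eq_closure, Int.mem_zmultiples_iff]
  exact (Int.isUnit_iff_natAbs_eq.mpr (by omega)).dvd

lemma exists_locallyLinear_shiftNorm (hx : Tame x) (hmin : TotallyMinimal x) :
    ∃ κ > 0, LocallyLinear hx.shiftNorm κ := by
  obtain ⟨κ, hκ, hlin⟩ := hx.exists_linear_mismatch hmin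
  refine ⟨κ, hκ, fun W hW => ?_⟩
  let k := W.sup Int.natAbs
  let e : ℤ → ℕ := fun a => (a + k).toNat
  have he : ∀ a ∈ W, ∀ b ∈ W, mismatch x (e a) (e b) = hx.shiftNorm (a - b) := by
    intro a ha b hb
    have hak : a.natAbs ≤ k := Finset.le_sup (f := Int.natAbs) ha
    have hbk : b.natAbs ≤ k := Finset.le_sup (f := Int.natAbs) hb
    rw [← hx.shiftNorm_sub]
    congr 1
    simp only [e]
    omega
  obtain ⟨f, hf⟩ := hlin (W.image e) <| by
    simp only [Finset.forall_mem_image]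
    exact fun a ha b hb => (he a ha b hb).trans_lt (hW a ha b hb)
  simp only [Finset.forall_mem_image] at hf
  exact ⟨f ∘ e, fun a ha b hb => (hf ha hb).trans (he a ha b hb)⟩

end Tame

end ShiftNorm

section Chart

variable {G : Type*} [AddCommGroup G] {ρ : AddGroupNorm G} {κ η ε : ℝ} {pos : G → ℝ} {s t u : G}

namespace LocallyLinear

lemma exists_oriented (h : LocallyLinear ρ κ) (W : Finset G) (hW : ∀ a ∈ W, ρ a < κ / 2)
    (h0 : 0 ∈ W) (hu : u ∈ W) :
    ∃ f : G → ℝ, f 0 = 0 ∧ f u = ρ u ∧ ∀ a ∈ W, ∀ b ∈ W, |f a - f b| = ρ (a - b) := by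
  obtain ⟨f, hf⟩ := h W fun a ha b hb =>
    (map_sub_le_add ρ a b).trans_lt (by linarith [hW a ha, hW b hb])
  have hfu := hf u hu 0 h0
  rw [sub_zero] at hfu
  rcases abs_choice (f u - f 0) with hsign | hsign
  · refine ⟨fun a => f a - f 0, sub_self _, hsign.symm.trans hfu, fun a ha b hb => ?_⟩
    rw [← hf a ha b hb, sub_sub_sub_cancel_right]
  · refine ⟨fun a => f 0 - f a, sub_self _, ?_, fun a ha b hb => ?_⟩
    · rw [← hfu, hsign, neg_sub]
    · rw [← hf a ha b hb, sub_sub_sub_cancel_left, abs_sub_comm]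

/-- The position of `t` on a line oriented by `u` is negative when `0` lies between `t` and `u`. -/
lemma exists_isometry (h : LocallyLinear ρ κ) (hu : u ≠ 0) (hκ : ρ u < κ / 2) :
    ∃ pos : G → ℝ, (∀ t, |pos t| = ρ t) ∧
      ∀ s t, ρ s < κ / 2 → ρ t < κ / 2 → |pos s - pos t| = ρ (s - t) := by
  classical
  let pos : G → ℝ := fun t => if ρ (t - u) = ρ t + ρ u then -ρ t else ρ t
  refine ⟨pos, fun t => ?_, fun s t hs ht => ?_⟩
  · simp only [pos]
    split_ifs <;> simp
  have hρu : 0 < ρ u := map_pos_of_ne_zero ρ hu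
  obtain ⟨f, hf0, hfu, hf⟩ := h.exists_oriented {0, u, s, t} (u := u)
    (by simp only [Finset.mem_insert, Finset.mem_singleton]; rintro a (rfl | rfl | rfl | rfl) <;>
      first | assumption | exact (map_zero ρ).trans_lt (hρu.trans hκ)) (by simp) (by simp)
  have hpos : ∀ a ∈ ({0, u, s, t} : Finset G), f a = pos a := by
    intro a ha
    have hfa := hf a ha 0 (by simp)
    have hfau := hf a ha u (by simp)
    rw [hf0, sub_zero, sub_zero] at hfa
    rw [hfu] at hfau
    simp only [pos]
    split_ifs with hbetween
    · rcases abs_cases (f a) with h | h <;> rcases abs_cases (f a - ρ u) with h' | h' <;> linarith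
    · rcases abs_cases (f a) with h | h
      · linarith
      · refine absurd ?_ hbetween
        rw [← hfa, ← hfau, h.1, abs_of_neg (by linarith)]
        ring
  rw [← hpos s (by simp), ← hpos t (by simp)]
  exact hf s (by simp) t (by simp)

end LocallyLinear

/-- An isometry of a ball of the normed group onto a subset of the real line, extended arbitrarily
to the whole group, which is additive on a smaller ball. -/
structure IsChart (ρ : AddGroupNorm G) (η : ℝ) (pos : G → ℝ) : Prop where
  abs_apply : ∀ t, |pos t| = ρ t
  map_add : ∀ s t, ρ s < η → ρ t < η → pos (s + t) = pos s + pos t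

lemma LocallyLinear.exists_isChart [IsAddTorsionFree G] (h : LocallyLinear ρ κ)
    (hu : u ≠ 0) (hκ : ρ u < κ / 2) : ∃ pos, IsChart ρ (κ / 4) pos := by
  obtain ⟨pos, habs, hiso⟩ := h.exists_isometry hu hκ
  refine ⟨pos, habs, fun s t hs ht => ?_⟩
  have hst : ρ (s + t) < κ / 2 := (map_add_le_add ρ s t).trans_lt (by linarith)
  have hs' := hiso (s + t) s hst (by linarith [apply_nonneg ρ s])
  have ht' := hiso (s + t) t hst (by linarith [apply_nonneg ρ s])
  rw [add_sub_cancel_left, ← habs] at hs'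
  rw [add_sub_cancel_right, ← habs] at ht'
  rcases abs_eq_abs.mp hs' with e | e
  · linarith
  rcases abs_eq_abs.mp ht' with e' | e'
  · linarith
  have hadd : s + t = 0 := by
    refine eq_zero_of_map_eq_zero ρ ?_
    rw [← habs, abs_eq_zero]
    linarith
  have hsub : s - t = 0 := by
    refine eq_zero_of_map_eq_zero ρ ?_
    rw [← hiso s t (by linarith [apply_nonneg ρ s]) (by linarith [apply_nonneg ρ s]),
      show pos s = pos t by linarith, sub_self, abs_zero]
  obtain rfl := sub_eq_zero.mp hsub
  obtain rfl : s = 0 := by simpa [← two_nsmul] using hadd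
  simpa using (habs 0).trans (map_zero ρ)

namespace IsChart

lemma map_zero (h : IsChart ρ η pos) : pos 0 = 0 := by
  rw [← abs_eq_zero, h.abs_apply, _root_.map_zero]

lemma map_neg (h : IsChart ρ η pos) (ht : ρ t < η) : pos (-t) = -pos t := by
  have := h.map_add t (-t) ht (by rwa [map_neg_eq_map])
  rw [add_neg_cancel, h.map_zero] at this
  linarith

lemma map_nsmul (h : IsChart ρ η pos) (n : ℕ) (hn : n * ρ t < η) : pos (n • t) = n * pos t := by
  induction n with
  | zero => simp [h.map_zero]
  | succ n ih =>
    have ht : 0 ≤ ρ t := apply_nonneg ρ t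
    push_cast at hn ⊢
    have hnt : pos (n • t) = n * pos t := ih (by linarith)
    have hρ : ρ (n • t) = n * ρ t := by
      rw [← h.abs_apply, hnt, abs_mul, h.abs_apply, Nat.abs_cast]
    rw [succ_nsmul, h.map_add _ _ (by rw [hρ]; linarith) (by nlinarith), hnt]
    ring

lemma map_zsmul (h : IsChart ρ η pos) (j : ℤ) (hj : |j * pos t| < η) :
    pos (j • t) = j * pos t := by
  rw [abs_mul, h.abs_apply] at hj
  obtain ⟨n, rfl | rfl⟩ := j.eq_nat_or_neg
  · simpa using h.map_nsmul n (by simpa using hj)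
  · have hn : n * ρ t < η := by simpa using hj
    rw [neg_smul, natCast_zsmul, h.map_neg, h.map_nsmul n hn]
    · simp
    · rwa [← h.abs_apply, h.map_nsmul n hn, abs_mul, Nat.abs_cast, h.abs_apply]

end IsChart

/-- The analytic continuation of the chart `pos` from the ball of radius `ε`: a multivalued
homomorphism from the group to the real line. -/
def continuation (ρ : AddGroupNorm G) (ε : ℝ) (pos : G → ℝ) : AddSubgroup (G × ℝ) :=
  AddSubgroup.closure {w | ρ w.1 < ε ∧ w.2 = pos w.1}

lemma mem_continuation (ht : ρ t < ε) : (t, pos t) ∈ continuation ρ ε pos :=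
  AddSubgroup.subset_closure ⟨ht, rfl⟩

lemma exists_mem_continuation (h : AddSubgroup.closure {t | ρ t < ε} = ⊤) (t : G) :
    ∃ v, (t, v) ∈ continuation ρ ε pos := by
  have ht : t ∈ (continuation ρ ε pos).map (AddMonoidHom.fst G ℝ) := by
    refine (AddSubgroup.closure_le _).mpr (fun s hs => ?_) (h ▸ AddSubgroup.mem_top t)
    exact ⟨_, mem_continuation hs, rfl⟩
  obtain ⟨⟨_, v⟩, hv, rfl⟩ := ht
  exact ⟨v, hv⟩

namespace IsChart

/-- Divide with remainder by the step `u`. -/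
lemma exists_add_eq_zsmul_add (h : IsChart ρ (3 * ε) pos) (hu : 0 < pos u) (huε : 2 * pos u < ε)
    (ht : ρ t < ε) (hs : ρ s < pos u) :
    ∃ (i : ℤ) (r : G), ρ r < pos u ∧ t + s = i • u + r ∧ pos t + pos s = i * pos u + pos r := by
  let i := ⌊(pos t + pos s) / pos u⌋
  have hi : i * pos u ≤ pos t + pos s := (le_div_iff₀ hu).mp (Int.floor_le _)
  have hi' : pos t + pos s < (i + 1) * pos u := (div_lt_iff₀ hu).mp (Int.lt_floor_add_one _)
  have ht' := abs_lt.mp ((h.abs_apply t).trans_lt ht)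
  have hs' := abs_lt.mp ((h.abs_apply s).trans_lt hs)
  have hts : pos (t + s) = pos t + pos s := h.map_add t s (by linarith) (by linarith)
  have hiu : |((-i : ℤ) : ℝ) * pos u| < 3 * ε := by
    push_cast
    rw [abs_lt]
    constructor <;> linarith
  have hiu' := h.map_zsmul (-i) hiu
  have hr : pos (t + s + -i • u) = pos t + pos s - i * pos u := by
    rw [h.map_add, hts, hiu']
    · push_cast
      ring
    · rw [← h.abs_apply, hts, abs_lt]
      constructor <;> linarith
    · rwa [← h.abs_apply, hiu']
  refine ⟨i, t + s + -i • u, ?_, by rw [neg_smul]; abel, by rw [hr]; ring⟩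
  rw [← h.abs_apply, hr, abs_lt]
  constructor <;> linarith

lemma exists_eq_zsmul_add (h : IsChart ρ (3 * ε) pos) (hu : 0 < pos u) (huε : 2 * pos u < ε)
    {w : G × ℝ} (hw : w ∈ continuation ρ ε pos) :
    ∃ (i : ℤ) (r : G), ρ r < pos u ∧ w.1 = i • u + r ∧ w.2 = i * pos u + pos r := by
  have step : ∀ t, ρ t < ε → ∀ v : G × ℝ,
      (∃ (i : ℤ) (r : G), ρ r < pos u ∧ v.1 = i • u + r ∧ v.2 = i * pos u + pos r) →
      ∃ (i : ℤ) (r : G), ρ r < pos u ∧ t + v.1 = i • u + r ∧ pos t + v.2 = i * pos u + pos r := by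
    rintro t ht v ⟨i, r, hr, hv, hv'⟩
    obtain ⟨j, r', hr', hj, hj'⟩ := h.exists_add_eq_zsmul_add hu huε ht hr
    refine ⟨i + j, r', hr', ?_, ?_⟩
    · rw [hv, add_left_comm, hj, add_smul, add_assoc]
    · rw [hv', add_left_comm, hj']
      push_cast
      ring
  induction hw using AddSubgroup.closure_induction_left with
  | zero => exact ⟨0, 0, by simpa using hu, by simp, by simp [h.map_zero]⟩
  | add_left w hw v _ ih => simpa [hw.2] using step w.1 hw.1 v ih
  | neg_add_cancel w hw v _ ih =>
    have := step (-w.1) (by simpa using hw.1) v ih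
    rw [h.map_neg (by linarith [hw.1, apply_nonneg ρ w.1])] at this
    simpa [hw.2] using this

lemma apply_eq_of_mem_continuation (h : IsChart ρ (3 * ε) pos) (hu : 0 < pos u)
    (huε : 2 * pos u < ε) {v : ℝ} (hv : |v| < ε) (htv : (t, v) ∈ continuation ρ ε pos) :
    pos t = v := by
  obtain ⟨i, r, hr, rfl, hi⟩ := h.exists_eq_zsmul_add hu huε htv
  dsimp only at hi
  have hr' := abs_lt.mp ((h.abs_apply r).trans_lt hr)
  have hiu : |i * pos u| < 3 * ε := by
    rw [abs_lt] at hv ⊢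
    constructor <;> linarith
  have hiu' := h.map_zsmul i hiu
  rw [h.map_add _ _ (by rwa [← h.abs_apply, hiu']) (by linarith), hiu', hi]

lemma exists_pos_of_lt (h : IsChart ρ η pos) (ht0 : t ≠ 0) (ht : ρ t < η) :
    ∃ s, 0 < pos s ∧ pos s = ρ t := by
  have hne : pos t ≠ 0 := fun h0 => (map_pos_of_ne_zero ρ ht0).ne' (by simp [← h.abs_apply, h0])
  rw [← h.abs_apply]
  rcases hne.lt_or_gt with hneg | hpos
  · exact ⟨-t, by rw [h.map_neg ht, abs_of_neg hneg]; exact ⟨neg_pos.mpr hneg, rfl⟩⟩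
  · exact ⟨t, hpos, (abs_of_pos hpos).symm⟩

end IsChart

end Chart

section RotationNorm

variable {G : Type*} [AddCommGroup G] {ρ : AddGroupNorm G} {ε : ℝ} {pos : G → ℝ} {u : G}

lemma IsChart.exists_period (h : IsChart ρ (3 * ε) pos) (hu : 0 < pos u) (huε : 2 * pos u < ε) :
    ∃ p ≥ 0, ∀ v, (0, v) ∈ continuation ρ ε pos ↔ ∃ k : ℤ, k * p = v := by
  let Λ := (continuation ρ ε pos).comap (AddMonoidHom.inr G ℝ)
  obtain ⟨p, hp⟩ := AddSubgroup.cyclic_of_isolated_zero (H := Λ) (a := ε) (by linarith) <| by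
    refine Set.disjoint_left.mpr fun v hv hvε => hvε.1.ne ?_
    rw [← h.map_zero, h.apply_eq_of_mem_continuation hu huε (abs_lt.mpr ⟨?_, hvε.2⟩) hv]
    linarith [hvε.1, hvε.2]
  refine ⟨|p|, abs_nonneg p, fun v => ?_⟩
  have hv : (0, v) ∈ continuation ρ ε pos ↔ v ∈ AddSubgroup.closure {p} := hp ▸ Iff.rfl
  rw [hv, AddSubgroup.mem_closure_singleton]
  simp only [zsmul_eq_mul]
  rcases abs_choice p with hsign | hsign <;> rw [hsign]
  exact ⟨fun ⟨k, hk⟩ => ⟨-k, by simpa using hk⟩, fun ⟨k, hk⟩ => ⟨-k, by simpa using hk⟩⟩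

/-- Near `0` the norm is `p` times the distance of `tα` to the integers, where `α` is irrational:
this is the pullback of an arc length on the circle under an irrational rotation. -/
structure IsRotationNorm (ρ : AddGroupNorm ℤ) (α p η : ℝ) : Prop where
  irrational : Irrational α
  scale_pos : 0 < p
  radius_pos : 0 < η
  apply_eq : ∀ t k : ℤ, |t * α - k| < η → ρ t = p * |t * α - k|
  exists_apply_eq : ∀ t, ρ t < η → ∃ k : ℤ, ρ t = p * |t * α - k|

lemma irrational_of_forall_ne {α : ℝ} (h : ∀ t k : ℤ, t ≠ 0 → t * α ≠ k) : Irrational α := by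
  rintro ⟨q, rfl⟩
  exact h q.den q.num (by exact_mod_cast q.den_nz) (by exact_mod_cast Rat.den_mul_eq_num q)

/-- Otherwise the chart would be the restriction of a homomorphism `ℤ → ℝ`, which is discrete. -/
lemma IsChart.period_ne_zero {ρ : AddGroupNorm ℤ} {pos : ℤ → ℝ} {η c p : ℝ}
    (h : IsChart ρ η pos) (hsmall : ∀ ε > 0, ∃ t ≠ 0, ρ t < ε) (hε : 0 < ε)
    (hpos : ∀ t, ρ t < ε → ∃ k : ℤ, k * p = pos t - t * c) : p ≠ 0 := by
  rintro rfl
  have habs : ∀ t, ρ t < ε → ρ t = |(t : ℝ)| * |c| := fun t ht => by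
    obtain ⟨k, hk⟩ := hpos t ht
    rw [← h.abs_apply, ← abs_mul]
    congr 1
    linarith
  obtain ⟨s, hs0, hs⟩ := hsmall ε hε
  have hc : 0 < |c| := by
    have hρs := map_pos_of_ne_zero ρ hs0
    rw [habs s hs] at hρs
    exact pos_of_mul_pos_right hρs (abs_nonneg _)
  obtain ⟨t, ht0, ht⟩ := hsmall (min ε |c|) (lt_min hε hc)
  obtain ⟨htε, htc⟩ := lt_min_iff.mp ht
  have : (1 : ℝ) ≤ |(t : ℝ)| := by exact_mod_cast Int.one_le_abs ht0
  rw [habs t htε] at htc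
  nlinarith

theorem exists_isRotationNorm {ρ : AddGroupNorm ℤ} {κ : ℝ} (hκ : 0 < κ) (hlin : LocallyLinear ρ κ)
    (hsmall : ∀ ε > 0, ∃ t ≠ 0, ρ t < ε)
    (hgen : ∀ ε > 0, AddSubgroup.closure {t : ℤ | ρ t < ε} = ⊤) :
    ∃ α p η, IsRotationNorm ρ α p η := by
  obtain ⟨s, hs0, hs⟩ := hsmall (κ / 2) (half_pos hκ)
  obtain ⟨pos, h⟩ := hlin.exists_isChart hs0 hs
  obtain ⟨ε, hε, rfl⟩ : ∃ ε > 0, κ = 4 * (3 * ε) := ⟨κ / 12, by positivity, by ring⟩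
  rw [mul_div_cancel_left₀ _ four_ne_zero] at h
  obtain ⟨t₀, ht₀, ht₀ε⟩ := hsmall (ε / 2) (half_pos hε)
  obtain ⟨u, hu, huρ⟩ := h.exists_pos_of_lt ht₀ (by linarith)
  obtain ⟨p, hp, hperiod⟩ := h.exists_period hu (by linarith)
  obtain ⟨c, hc⟩ := exists_mem_continuation (pos := pos) (hgen ε hε) 1
  have hct : ∀ t : ℤ, (t, t * c) ∈ continuation ρ ε pos := fun t => by
    simpa using AddSubgroup.zsmul_mem _ hc t
  have hpos : ∀ t, ρ t < ε → ∃ k : ℤ, k * p = pos t - t * c := fun t ht =>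
    (hperiod _).mp (by simpa using sub_mem (mem_continuation ht) (hct t))
  replace hp : 0 < p := hp.lt_of_ne' (h.period_ne_zero hsmall hε hpos)
  have hscale : ∀ t k : ℤ, p * |t * (c / p) - k| = |t * c - k * p| := fun t k => by
    rw [← abs_of_pos hp, ← abs_mul, abs_of_pos hp]
    congr 1
    field_simp
  have happly : ∀ t k : ℤ, |t * (c / p) - k| < ε / p → ρ t = p * |t * (c / p) - k| := by
    intro t k htk
    rw [lt_div_iff₀ hp, mul_comm, hscale] at htk
    have hmem := sub_mem (hct t) ((hperiod (k * p)).mpr ⟨k, rfl⟩)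
    rw [Prod.mk_sub_mk, sub_zero] at hmem
    rw [hscale, ← h.abs_apply, h.apply_eq_of_mem_continuation hu (by linarith) htk hmem]
  refine ⟨c / p, p, min ε (ε / p), irrational_of_forall_ne fun t k ht he => ?_, hp,
    by positivity, fun t k htk => happly t k (htk.trans_le (min_le_right _ _)), fun t ht => ?_⟩
  · have := happly t k (by rw [he, sub_self, abs_zero]; positivity)
    rw [he, sub_self, abs_zero, mul_zero] at this
    exact ht (eq_zero_of_map_eq_zero ρ this)
  · obtain ⟨k, hk⟩ := hpos t (ht.trans_le (min_le_left _ _))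
    refine ⟨-k, ?_⟩
    rw [hscale, ← h.abs_apply]
    congr 1
    push_cast
    linarith

end RotationNorm

/-! ### Coding by two arcs -/

section CircleCoding

variable {x : Seq2} {α p η : ℝ} {v : Fin 2}

/-- `u` is a real representative of the point `nα` of the circle. -/
def IsLift (α : ℝ) (n : ℕ) (u : ℝ) : Prop := ∃ k : ℤ, u = n * α - k

lemma isLift_iff_coe_eq {n : ℕ} {u : ℝ} :
    IsLift α n u ↔ (u : T1) = ((n * α : ℝ) : T1) := by
  rw [eq_comm, ← sub_eq_zero, ← AddCircle.coe_sub, AddCircle.coe_eq_zero_iff]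
  exact exists_congr fun k => by rw [zsmul_one, eq_comm, sub_eq_iff_eq_add, eq_sub_iff_add_eq',
    eq_comm]

namespace IsLift

variable {m n : ℕ} {u w : ℝ}

lemma mul_self (α : ℝ) (n : ℕ) : IsLift α n (n * α) := ⟨0, by simp⟩

lemma add (hu : IsLift α m u) (hw : IsLift α n w) : IsLift α (m + n) (u + w) := by
  obtain ⟨k, rfl⟩ := hu
  obtain ⟨l, rfl⟩ := hw
  exact ⟨k + l, by push_cast; ring⟩

lemma add_intCast (hu : IsLift α m u) (k : ℤ) : IsLift α m (u + k) := by
  obtain ⟨l, rfl⟩ := hu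
  exact ⟨l - k, by push_cast; ring⟩

lemma unique (hα : Irrational α) (hm : IsLift α m u) (hn : IsLift α n u) : m = n := by
  obtain ⟨k, rfl⟩ := hm
  obtain ⟨l, hl⟩ := hn
  by_contra hne
  apply hα.intCast_mul (m := (m : ℤ) - n) (by omega)
  exact ⟨k - l, by push_cast; linarith⟩

end IsLift

lemma exists_isLift_mem_Ico (α : ℝ) (n : ℕ) (y : ℝ) :
    ∃ u ∈ Ico y (y + 1), IsLift α n u :=
  ⟨toIcoMod one_pos y (n * α), toIcoMod_mem_Ico _ _ _, toIcoDiv one_pos y (n * α),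
    by rw [toIcoMod, zsmul_one]⟩

lemma exists_isLift_mem_Ioo (hα : Irrational α) {m n : ℕ} {y : ℝ} (hy : IsLift α m y)
    (hmn : m ≠ n) : ∃ u ∈ Ioo y (y + 1), IsLift α n u := by
  obtain ⟨u, ⟨hyu, huy⟩, hu⟩ := exists_isLift_mem_Ico α n y
  refine ⟨u, ⟨hyu.lt_of_ne ?_, huy⟩, hu⟩
  rintro rfl
  exact hmn (hy.unique hα hu)

namespace Tame

lemma mismatch_eq_of_isLift (hx : Tame x) (hρ : IsRotationNorm hx.shiftNorm α p η) {a b : ℕ}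
    {u w : ℝ} (hu : IsLift α a u) (hw : IsLift α b w) (huw : |u - w| < η) :
    mismatch x a b = p * |u - w| := by
  obtain ⟨k, rfl⟩ := hu
  obtain ⟨l, rfl⟩ := hw
  have hsub : a * α - k - (b * α - l) = ((a - b : ℤ) : ℝ) * α - (k - l : ℤ) := by push_cast; ring
  rw [hsub] at huw ⊢
  rw [← hx.shiftNorm_sub, hρ.apply_eq _ _ huw]

lemma exists_abs_sub_lt_of_sameWord (hx : Tame x) (hρ : IsRotationNorm hx.shiftNorm α p η)
    {δ : ℝ} (hδ : 0 < δ) :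
    ∃ K, ∀ m n u w, SameWord x K m n → IsLift α m u → IsLift α n w →
      ∃ k : ℤ, |u - w - k| < δ := by
  obtain ⟨K, hK⟩ := hx.exists_mismatch_lt_of_sameWord
    (lt_min (mul_pos hρ.scale_pos hδ) hρ.radius_pos)
  refine ⟨K, fun m n u w he hu hw => ?_⟩
  obtain ⟨k, rfl⟩ := hu
  obtain ⟨l, rfl⟩ := hw
  wlog hmn : m ≤ n generalizing m n k l
  · obtain ⟨i, hi⟩ := this n m he.symm l k (by omega)
    exact ⟨-i, by rw [← abs_neg]; push_cast; convert hi using 2; ring⟩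
  obtain ⟨t, rfl⟩ := Nat.exists_eq_add_of_le hmn
  have hsmall := hK t m he
  rw [mismatch_comm, ← hx.shiftNorm_sub, Nat.cast_zero, sub_zero, lt_min_iff] at hsmall
  obtain ⟨i, hi⟩ := hρ.exists_apply_eq t hsmall.2
  refine ⟨l - k - i, lt_of_mul_lt_mul_left ?_ hρ.scale_pos.le⟩
  rw [hi] at hsmall
  convert hsmall.1 using 2
  rw [← abs_neg]
  congr 1
  push_cast
  ring

lemma exists_isReturn_isLift (hx : Tame x) (hρ : IsRotationNorm hx.shiftNorm α p η)
    (V : Finset ℕ) {ε : ℝ} (hε : 0 < ε) :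
    ∃ t ≥ 1, ∃ τ, IsReturn x V t ∧ IsLift α t τ ∧ 0 < τ ∧ τ < ε := by
  have hrec := hx.uniformlyRecurrent.recurrent
  have hzero : IsLift α 0 0 := ⟨0, by simp⟩
  have hlift : ∀ {δ}, 0 < δ → ∃ K, ∀ t, SameWord x K 0 t → ∃ τ, IsLift α t τ ∧ |τ| < δ := by
    intro δ hδ
    obtain ⟨K, hK⟩ := hx.exists_abs_sub_lt_of_sameWord hρ hδ
    refine ⟨K, fun t he => ?_⟩
    obtain ⟨k, hk⟩ := hK t 0 _ _ he.symm (.mul_self α t) hzero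
    refine ⟨t * α - k, ⟨k, rfl⟩, by simpa using hk⟩
  obtain ⟨K₁, hK₁⟩ := hx.exists_isReturn_of_sameWord V
  obtain ⟨K₂, hK₂⟩ := hlift (half_pos hε)
  obtain ⟨t, ht, -, he⟩ := hrec.exists_dvd_sameWord (max K₁ K₂) 1 (le_refl 1)
  obtain ⟨τ, hτ, hτε⟩ := hK₂ t (he.mono (le_max_right _ _))
  have hτ0 : τ ≠ 0 := by
    rintro rfl
    have := hτ.unique hρ.irrational hzero
    omega
  rcases hτ0.lt_or_gt with hneg | hpos
  · -- A later return that comes much closer to `0`, started at the time `t`, moves by about `-τ`.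
    obtain ⟨K₃, hK₃⟩ := hlift (neg_pos.mpr hneg)
    obtain ⟨T, hT, -, heT⟩ := hrec.exists_dvd_sameWord (max K₁ K₃) (t + 1) (le_refl 1)
    obtain ⟨σ, hσ, hσ'⟩ := hK₃ T (heT.mono (le_max_right _ _))
    obtain ⟨d, rfl⟩ := Nat.exists_eq_add_of_le (Nat.le_of_succ_le hT)
    rw [abs_lt] at hτε hσ'
    obtain ⟨k, rfl⟩ := hτ
    obtain ⟨l, rfl⟩ := hσ
    have htd := (he.mono (le_max_left _ _)).symm.trans (heT.mono (le_max_left K₁ K₃))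
    refine ⟨d, by omega, _, hK₁ d t htd, ⟨l - k, rfl⟩, ?_, ?_⟩ <;> push_cast at hσ' ⊢ <;> linarith
  · refine ⟨t, ht, τ, hK₁ t 0 ?_, hτ, hpos, ?_⟩
    · simpa using he.mono (le_max_left K₁ K₂)
    · linarith [lt_of_abs_lt hτε]

lemma eq_of_isLift_between (hx : Tame x) (hρ : IsRotationNorm hx.shiftNorm α p η)
    {a b c : ℕ} {u w z : ℝ} (hu : IsLift α a u) (hw : IsLift α b w) (hz : IsLift α c z)
    (huw : u ≤ w) (hwz : w ≤ z) (huz : z - u < η) (hac : x a = x c) : x b = x a := by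
  have hadd : mismatch x a c = mismatch x a b + mismatch x b c := by
    have huw' : |u - w| = w - u := by rw [abs_sub_comm, abs_of_nonneg (sub_nonneg.mpr huw)]
    have hwz' : |w - z| = z - w := by rw [abs_sub_comm, abs_of_nonneg (sub_nonneg.mpr hwz)]
    have huz' : |u - z| = z - u := by
      rw [abs_sub_comm, abs_of_nonneg (sub_nonneg.mpr (huw.trans hwz))]
    rw [hx.mismatch_eq_of_isLift hρ hu hw (by linarith),
      hx.mismatch_eq_of_isLift hρ hw hz (by linarith),
      hx.mismatch_eq_of_isLift hρ hu hz (by linarith), huw', hwz', huz']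
    ring
  by_contra hne
  exact hx.forall_of_mismatch_eq_add hadd 0 (by simpa using ⟨hac, hne⟩)

lemma exists_leave_isLift (hx : Tame x) (hρ : IsRotationNorm hx.shiftNorm α p η)
    {t a b : ℕ} {τ u w : ℝ} (hτ : IsLift α t τ) (hτ0 : 0 < τ) (hτη : τ < η)
    (hu : IsLift α a u) (hw : IsLift α b w) (huw : u < w) (ha : x a = v) (hb : x b ≠ v) :
    ∃ m z, IsLift α m z ∧ x m = v ∧ x (m + t) ≠ v ∧ u ≤ z ∧ z < w := by
  by_contra! hstay
  have hwalk : ∀ N : ℕ, IsLift α (a + N * t) (u + N * τ) ∧ x (a + N * t) = v ∧ u + N * τ < w := by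
    intro N
    induction N with
    | zero => simpa using ⟨hu, ha, huw⟩
    | succ N ih =>
      obtain ⟨hlift, hN, hlt⟩ := ih
      have hlift' : IsLift α (a + (N + 1) * t) (u + (N + 1 : ℕ) * τ) := by
        convert hlift.add hτ using 1 <;> push_cast <;> ring
      have hN' : x (a + (N + 1) * t) = v := by
        have := mt (hstay _ _ hlift hN · (by nlinarith [N.cast_nonneg (α := ℝ)])) hlt.not_ge
        rw [not_ne_iff] at this
        rwa [add_mul, one_mul, ← add_assoc]
      refine ⟨hlift', hN', lt_of_not_ge fun hle => hb ?_⟩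
      rw [← hN]
      refine hx.eq_of_isLift_between hρ hlift hw hlift' hlt.le hle ?_ (hN.trans hN'.symm)
      push_cast
      linarith
  obtain ⟨N, hN⟩ := Archimedean.arch (w - u) hτ0
  rw [nsmul_eq_mul] at hN
  linarith [(hwalk N).2.2]

/-- Positions at which the sequence leaves the letter `v` along one short return time carry the
same long word, so they lie close together on the circle. -/
lemma not_interlaced (hx : Tame x) (hρ : IsRotationNorm hx.shiftNorm α p η) {a b c d : ℕ}
    {u₀ u₁ u₂ u₃ : ℝ} (h₀ : IsLift α a u₀) (h₁ : IsLift α b u₁) (h₂ : IsLift α c u₂)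
    (h₃ : IsLift α d u₃) (h₀₁ : u₀ < u₁) (h₁₂ : u₁ < u₂) (h₂₃ : u₂ < u₃) (h₃₀ : u₃ < u₀ + 1)
    (ha : x a = v) (hb : x b ≠ v) (hc : x c = v) : x d = v := by
  by_contra hd
  obtain ⟨K, hK⟩ := hx.exists_abs_sub_lt_of_sameWord hρ
    (lt_min (sub_pos.mpr h₁₂) (sub_pos.mpr h₃₀))
  obtain ⟨V, hKV, hV⟩ := hx.lowComplexity.exists_saturated_superset (insert 0 (Finset.range K))
  obtain ⟨t, ht1, τ, ht, hτ, hτ0, hτη⟩ := hx.exists_isReturn_isLift hρ V hρ.radius_pos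
  obtain ⟨m, z, hz, hm, hmt, hu₀z, hzu₁⟩ := hx.exists_leave_isLift hρ hτ hτ0 hτη h₀ h₁ h₀₁ ha hb
  obtain ⟨n, w, hw, hn, hnt, hu₂w, hwu₃⟩ := hx.exists_leave_isLift hρ hτ hτ0 hτη h₂ h₃ h₂₃ hc hd
  have hmn := hx.agree_of_leave hV ht1 ht (hKV (Finset.mem_insert_self 0 _)) hm hmt hn hnt
  obtain ⟨k, hk⟩ := hK m n z w (hmn.mono ((Finset.subset_insert _ _).trans hKV)) hz hw
  rw [lt_min_iff, abs_lt, abs_lt] at hk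
  have hk0 : (k : ℝ) < 0 := by linarith
  have hk1 : (-1 : ℝ) < k := by linarith
  norm_cast at hk0 hk1
  omega

lemma eq_of_isLift_mem_Icc (hx : Tame x) (hρ : IsRotationNorm hx.shiftNorm α p η)
    {m a b n : ℕ} {y s s' r : ℝ} (hy : IsLift α m y) (hs : IsLift α a s) (hs' : IsLift α b s')
    (hr : IsLift α n r) (hys : y < s) (hs'y : s' < y + 1) (hrs : r ∈ Icc s s')
    (hm : x m ≠ v) (ha : x a = v) (hb : x b = v) : x n = v := by
  obtain ⟨hsr, hrs'⟩ := hrs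
  rcases hsr.eq_or_lt with rfl | hsr
  · rwa [← hs.unique hρ.irrational hr]
  rcases hrs'.eq_or_lt with rfl | hrs'
  · rwa [hr.unique hρ.irrational hs']
  by_contra hn
  have hmb := hx.not_interlaced hρ hy hs hr hs' hys hsr hrs' hs'y rfl (ha.trans_ne hm.symm)
    (eq_of_ne_of_ne hn hm)
  exact hm (hmb.symm.trans hb)

end Tame

end CircleCoding

section Arcs

lemma isArc_image_coe {J : Set ℝ} {y : ℝ} (hJ : J.OrdConnected) (hsub : J ⊆ Icc y (y + 1)) :
    IsArc ((fun r : ℝ => (r : T1)) '' J) := by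
  have hbelow : BddBelow J := bddBelow_Icc.mono hsub
  have habove : BddAbove J := bddAbove_Icc.mono hsub
  rcases J.eq_empty_or_nonempty with rfl | hne
  · exact ⟨0, 0, by simp, by simp⟩
  have hlen : sSup J - sInf J ≤ 1 := by
    have := le_csInf hne fun r hr => (hsub hr).1
    have := csSup_le hne fun r hr => (hsub hr).2
    linarith
  refine ⟨sInf J, sSup J, hlen, ?_⟩
  have hmem := (isPreconnected_iff_ordConnected.mpr hJ).mem_intervals
  generalize sInf J = a at hmem
  generalize sSup J = b at hmem
  simp only [mem_insert_iff, mem_singleton_iff] at hmem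
  rcases hmem with rfl | rfl | rfl | rfl | rfl | rfl | rfl | rfl | rfl | rfl
  · exact .inl rfl
  · exact .inr (.inl rfl)
  · exact .inr (.inr (.inl rfl))
  · exact .inr (.inr (.inr rfl))
  · exact absurd habove (not_bddAbove_Ici a)
  · exact absurd habove (not_bddAbove_Ioi a)
  · exact absurd hbelow (not_bddBelow_Iic b)
  · exact absurd hbelow (not_bddBelow_Iio b)
  · exact absurd habove not_bddAbove_univ
  · exact absurd rfl hne.ne_empty

lemma compl_image_coe {J : Set ℝ} (hJ : J.OrdConnected) (hne : J.Nonempty) :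
    ((fun r : ℝ => (r : T1)) '' J)ᶜ =
      (fun r : ℝ => (r : T1)) '' {w | ∀ u ∈ J, u < w ∧ w < u + 1} := by
  obtain ⟨u₀, hu₀⟩ := hne
  ext q
  constructor
  · intro hq
    obtain ⟨r, ⟨hr, hr'⟩, rfl⟩ := AddCircle.coe_image_Ico_eq (1 : ℝ) u₀ ▸ mem_univ q
    refine ⟨r, fun u hu => ⟨?_, ?_⟩, rfl⟩ <;> by_contra! hle
    · exact hq ⟨r, hJ.out hu₀ hu ⟨hr, hle⟩, rfl⟩
    · exact hq ⟨r - 1, hJ.out hu hu₀ ⟨by linarith, by linarith⟩, by simp⟩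
  · rintro ⟨w, hw, rfl⟩ ⟨u, hu, huw⟩
    obtain ⟨hlt, hlt'⟩ := hw u hu
    exact hlt.ne ((AddCircle.coe_eq_coe_iff_of_mem_Ico (a := u) ⟨le_rfl, by linarith⟩
      ⟨hlt.le, hlt'⟩).mp huw)

lemma isArc_compl_image_coe {J : Set ℝ} (hJ : J.OrdConnected) (hne : J.Nonempty) :
    IsArc ((fun r : ℝ => (r : T1)) '' J)ᶜ := by
  obtain ⟨u, hu⟩ := hne
  rw [compl_image_coe hJ ⟨u, hu⟩]
  refine isArc_image_coe (y := u) ⟨fun a ha b hb c hc w hw => ?_⟩ fun w hw =>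
    ⟨(hw u hu).1.le, (hw u hu).2.le⟩
  exact ⟨(ha w hw).1.trans_le hc.1, hc.2.trans_lt (hb w hw).2⟩

lemma SimpleCircleCoding.of_isArc {x : Seq2} {α : ℝ} (hα : Irrational α) {A : Set T1}
    (hA : IsArc A) (hA' : IsArc Aᶜ) (hne : A.Nonempty) (hne' : Aᶜ.Nonempty)
    (h : ∀ n : ℕ, x n = 1 ↔ ((n * α : ℝ) : T1) ∈ A) : SimpleCircleCoding x := by
  refine ⟨α, hα, ![Aᶜ, A], Fin.forall_fin_two.mpr ⟨hA', hA⟩, Fin.forall_fin_two.mpr ⟨hne', hne⟩,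
    disjoint_compl_left, compl_union_self A, fun n => Fin.forall_fin_two.mpr ⟨?_, h n⟩⟩
  change x n = 0 ↔ _ ∉ A
  rw [← h n]
  omega

end Arcs

namespace Tame

variable {x : Seq2} {α p η : ℝ}

theorem simpleCircleCoding (hx : Tame x) (hρ : IsRotationNorm hx.shiftNorm α p η) :
    SimpleCircleCoding x := by
  obtain ⟨m, -, hm, -⟩ := hx.exists_ge_leave le_rfl 0 0 0
  obtain ⟨a, -, ha, -⟩ := hx.exists_ge_leave le_rfl 1 0 0
  rw [add_zero] at hm ha
  set y := (m : ℝ) * α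
  have hy : IsLift α m y := .mul_self α m
  have hlift : ∀ n, x n = 1 → ∃ u ∈ Ioo y (y + 1), IsLift α n u := fun n hn =>
    exists_isLift_mem_Ioo hρ.irrational hy (by rintro rfl; omega)
  let S : Set ℝ := {u | u ∈ Ioo y (y + 1) ∧ ∃ n, x n = 1 ∧ IsLift α n u}
  let J : Set ℝ := upperClosure S ∩ lowerClosure S
  have hSJ : S ⊆ J := subset_inter subset_upperClosure subset_lowerClosure
  have hJ : J.OrdConnected := (upperClosure S).upper.ordConnected.inter
    (lowerClosure S).lower.ordConnected
  have hJsub : J ⊆ Icc y (y + 1) := by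
    rintro r ⟨⟨s, hs, hsr⟩, s', hs', hrs'⟩
    exact ⟨hs.1.1.le.trans hsr, hrs'.trans hs'.1.2.le⟩
  have hcoding : ∀ n : ℕ, x n = 1 ↔ ((n * α : ℝ) : T1) ∈ (fun r : ℝ => (r : T1)) '' J := by
    refine fun n => ⟨fun hn => ?_, ?_⟩
    · obtain ⟨u, huy, hu⟩ := hlift n hn
      exact ⟨u, hSJ ⟨huy, n, hn, hu⟩, isLift_iff_coe_eq.mp hu⟩
    · rintro ⟨r, ⟨⟨s, ⟨hsy, b, hb, hs⟩, hsr⟩, s', ⟨hsy', c, hc, hs'⟩, hrs'⟩, hr⟩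
      exact hx.eq_of_isLift_mem_Icc hρ hy hs hs' (isLift_iff_coe_eq.mpr hr) hsy.1 hsy'.2
        ⟨hsr, hrs'⟩ (by omega) hb hc
  have hne : J.Nonempty := by
    obtain ⟨u, huy, hu⟩ := hlift a ha
    exact ⟨u, hSJ ⟨huy, a, ha, hu⟩⟩
  exact .of_isArc hρ.irrational (isArc_image_coe hJ hJsub) (isArc_compl_image_coe hJ hne)
    (hne.image _) ⟨_, (hcoding m).not.mp (by omega)⟩ hcoding

lemma exists_Ioo_forall_isLift (hx : Tame x) (hρ : IsRotationNorm hx.shiftNorm α p η)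
    (v : Fin 2) : ∃ s s', s < s' ∧ ∀ n, ∀ r ∈ Ioo s s', IsLift α n r → x n = v := by
  obtain ⟨w, hw⟩ := exists_ne v
  obtain ⟨m, -, hm, -⟩ := hx.exists_ge_leave le_rfl w 0 0
  obtain ⟨a, -, ha, -⟩ := hx.exists_ge_leave le_rfl v 0 0
  obtain ⟨b, hab, hb, -⟩ := hx.exists_ge_leave le_rfl v 0 (a + 1)
  rw [add_zero] at hm ha hb
  have hy : IsLift α m (m * α) := .mul_self α m
  obtain ⟨s, hsy, hs⟩ := exists_isLift_mem_Ioo hρ.irrational hy (n := a) (by grind)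
  obtain ⟨s', hsy', hs'⟩ := exists_isLift_mem_Ioo hρ.irrational hy (n := b) (by grind)
  replace hab : a ≠ b := by omega
  have hss' : s ≠ s' := by
    rintro rfl
    exact hab (hs.unique hρ.irrational hs')
  wlog hlt : s < s' generalizing a b s s'
  · exact this b hb a ha s' hsy' hs' s hsy hs hab.symm hss'.symm (hss'.lt_or_gt.resolve_left hlt)
  exact ⟨s, s', hlt, fun n r hrs hr => hx.eq_of_isLift_mem_Icc hρ hy hs hs' hr hsy.1 hsy'.2
    (Ioo_subset_Icc_self hrs) (hm ▸ hw) ha hb⟩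

end Tame

/-! ### Holes -/

section OneHole

variable {x : Seq2} {q N a : ℕ}

/-- The sequence `x` with the letters on the class of `a` modulo `q` erased, together with the
residues of the positions. Its periods are the multiples of `q` which are periods of `x` off this
class. -/
def holed (x : Seq2) (q a : ℕ) : ℕ → ℕ × Fin 2 := fun m => (m % q, if m % q = a then 0 else x m)

/-- Apart from the letters on the class of `a` modulo `Q`, the sequence `x` has the period `Q`, and
this period is recognizable. The class of `a` is the hole. -/
structure OneHole (x : Seq2) (Q a : ℕ) : Prop where
  lt : a < Q
  add_eq : ∀ m, m % Q ≠ a → x (m + Q) = x m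
  recognizes : ∃ N, Recognizes x Q N

lemma add_mod_of_dvd {d : ℕ} (h : q ∣ d) (m : ℕ) : (m + d) % q = m % q := by
  obtain ⟨k, rfl⟩ := h
  exact Nat.add_mul_mod_self_left m q k

lemma dvd_of_add_mod_eq {m d : ℕ} (h : (m + d) % q = m % q) : q ∣ d := by
  simpa using (Nat.modEq_iff_dvd' (Nat.le_add_right m d)).mp h.symm

lemma exists_lt_add_mod_eq {b : ℕ} (hb : b < q) (m : ℕ) : ∃ i < q, (m + i) % q = b := by
  have hm := Nat.mod_lt m (Nat.zero_lt_of_lt hb)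
  refine ⟨(b + (q - m % q)) % q, Nat.mod_lt _ (Nat.zero_lt_of_lt hb), ?_⟩
  rw [Nat.add_mod_mod, Nat.add_mod, Nat.add_mod_mod,
    show m % q + (b + (q - m % q)) = b + q by omega, Nat.add_mod_right, Nat.mod_eq_of_lt hb]

lemma eq_of_add_mod_eq {m i j : ℕ} (hi : i < q) (hj : j < q) (h : (m + i) % q = (m + j) % q) :
    i = j := by
  have : i % q = j % q := Nat.ModEq.add_left_cancel' m h
  rwa [Nat.mod_eq_of_lt hi, Nat.mod_eq_of_lt hj] at this

lemma periodic_holed_iff {d : ℕ} :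
    Function.Periodic (holed x q a) d ↔ q ∣ d ∧ ∀ m, m % q ≠ a → x (m + d) = x m := by
  simp only [Function.Periodic, holed, Prod.mk.injEq]
  constructor
  · intro h
    refine ⟨dvd_of_add_mod_eq (h 0).1, fun m hm => ?_⟩
    have := (h m).2
    rwa [(h m).1, if_neg hm, if_neg hm] at this
  · rintro ⟨hd, h⟩ m
    rw [add_mod_of_dvd hd]
    refine ⟨rfl, ?_⟩
    split_ifs with hm
    · rfl
    · exact h m hm

lemma Recognizes.mono {N' : ℕ} (h : Recognizes x q N) (hN : N ≤ N') : Recognizes x q N' :=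
  fun _ _ he => h _ _ (SameWord.mono he hN)

lemma Recognizes.isLocal (h : Recognizes x q N) (b : ℕ) (v : Fin 2) :
    IsLocal x fun n => n % q = b ∧ x n = v := by
  refine ⟨N + 1, fun m n he => ?_⟩
  have hletter : x m = x n := sameWord_iff.mp he 0 N.succ_pos
  simp only [h m n (SameWord.mono he N.le_succ), hletter]

/-- Otherwise "being in the class of `m` with letter `v`" would be invariant under `t`. -/
lemma Recognizes.exists_leave (hx : Recurrent x) (h : Recognizes x q N) {m t : ℕ} (ht : 1 ≤ t)
    (hqt : q ∣ t) (hm : x (m + t) ≠ x m) (v : Fin 2) :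
    ∃ n, n % q = m % q ∧ x n = v ∧ x (n + t) ≠ v := by
  by_contra! hstay
  have hper := (h.isLocal (m % q) v).periodic_of_imp_add hx ht fun n hn =>
    ⟨(add_mod_of_dvd hqt n).trans hn.1, hstay n hn.1 hn.2⟩
  have hiff := (hper m).to_iff
  simp only [add_mod_of_dvd hqt, true_and] at hiff
  omega

namespace Tame

/-- A return time of a saturated window is a period of `x` off a single class: all positions at
which it moves `0` to `1` show the same pattern, so they lie in the same class. -/
lemma exists_periodic_holed (hx : Tame x) (hq : 1 ≤ q) (h : Recognizes x q N) :
    ∃ a < q, ∃ P ≥ 1, Function.Periodic (holed x q a) P := by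
  obtain ⟨V, hNV, hV⟩ := hx.lowComplexity.exists_saturated_superset (insert 0 (Finset.range N))
  obtain ⟨t, ht, hqt, hret, -⟩ := hx.uniformlyRecurrent.recurrent.exists_isReturn V 0 1 hq
  obtain ⟨m, hm⟩ := hx.aperiodic t ht
  refine ⟨m % q, Nat.mod_lt _ hq, t, ht, periodic_holed_iff.mpr ⟨hqt, fun n hn => ?_⟩⟩
  by_contra hnt
  obtain ⟨m', hm', hm0, hm1⟩ :=
    h.exists_leave hx.uniformlyRecurrent.recurrent ht hqt hm.symm 0
  obtain ⟨n', hn', hn0, hn1⟩ := h.exists_leave hx.uniformlyRecurrent.recurrent ht hqt hnt 0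
  have := hx.agree_of_leave hV ht hret (s := 0) (hNV (by simp)) (m := m') (n := n') hm0 hm1 hn0 hn1
  have := h _ _ (this.mono ((Finset.subset_insert _ _).trans hNV))
  exact hn (hn'.symm.trans (this.symm.trans hm'))

lemma exists_ne_of_periodic_holed (hx : Tame x) {P g : ℕ} (hP : 1 ≤ P)
    (h : Function.Periodic (holed x q a) P) (hg : 1 ≤ g) (hqg : q ∣ g) :
    ∃ m, m % q = a ∧ x (m + g) ≠ x m := by
  by_contra! hper
  obtain ⟨m, hm⟩ := hx.aperiodic (P * g) (Nat.mul_pos hP hg)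
  apply hm
  by_cases hma : m % q = a
  · refine ((imp_add_mul_of_imp_add (b := fun n => n % q = a ∧ x n = x m) ?_ ⟨hma, rfl⟩ P).2).symm
    exact fun n hn => ⟨(add_mod_of_dvd hqg n).trans hn.1, (hper n hn.1).trans hn.2⟩
  · have := h.nat_mul g
    rw [Nat.cast_id, mul_comm] at this
    exact ((periodic_holed_iff.mp this).2 m hma).symm

end Tame

lemma Recognizes.exists_ge_letter (hx : Recurrent x) (h : Recognizes x q N) (hq : 1 ≤ q) {m : ℕ}
    (hm : x (m + q) ≠ x m) (v : Fin 2) (B : ℕ) : ∃ n ≥ B, n % q = m % q ∧ x n = v := by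
  obtain ⟨n, hnm, hn, -⟩ := h.exists_leave hx hq dvd_rfl hm v
  obtain ⟨t, ht, hqt, hword⟩ := hx.exists_dvd_sameWord (n + 1) B hq
  refine ⟨t + n, by omega, by rw [add_comm, add_mod_of_dvd hqt, hnm], ?_⟩
  rw [← sameWord_iff.mp hword n n.lt_succ_self, zero_add, hn]

/-- The least period off the hole of a recognizable period is again recognizable. -/
lemma Recognizes.exists_oneHole_or_lt (hx : Tame x) (hq : 1 ≤ q) (h : Recognizes x q N) :
    (∃ a, OneHole x q a) ∨ ∃ q', q ∣ q' ∧ q < q' ∧ Recognizes x q' (max N q') := by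
  classical
  obtain ⟨a, ha, P, hP, hper⟩ := hx.exists_periodic_holed hq h
  have hex : ∃ r, 0 < r ∧ Function.Periodic (holed x q a) r := ⟨P, hP, hper⟩
  obtain ⟨q', ⟨hq', hper'⟩, hmin⟩ : ∃ q', (0 < q' ∧ Function.Periodic (holed x q a) q') ∧
      ∀ r, 0 < r → Function.Periodic (holed x q a) r → q' ≤ r :=
    ⟨_, Nat.find_spec hex, fun r hr hr' => Nat.find_min' hex ⟨hr, hr'⟩⟩
  obtain ⟨hdvd, hadd⟩ := periodic_holed_iff.mp hper'
  rcases (Nat.le_of_dvd hq' hdvd).eq_or_lt with rfl | hlt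
  · exact .inl ⟨a, ha, hadd, N, h⟩
  refine .inr ⟨q', hdvd, hlt, .of_forall_dvd fun m d he => ?_⟩
  have hqd : q ∣ d := dvd_of_add_mod_eq (h _ _ (SameWord.mono he (le_max_left N q'))).symm
  refine dvd_of_periodic_of_minimal hper' hq' hmin (periodic_of_forall_lt_eq hper' hq' (m := m) ?_)
  intro i hi
  have hword := sameWord_iff.mp he i (hi.trans_le (le_max_right N q'))
  simp only [holed, hword, add_right_comm m d i, add_mod_of_dvd hqd]

lemma eq_of_ncard_range_le {ι α β : Type*} {f : ι → α} {g : ι → β}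
    (hfg : ∀ i j, f i = f j → g i = g j) (hg : Function.Surjective g) (hfin : (range f).Finite)
    (hcard : (range f).ncard ≤ Nat.card β) {i j : ι} (h : g i = g j) : f i = f j := by
  have hinj : Function.Injective fun b => f (Function.surjInv hg b) := fun b c hbc => by
    rw [← Function.surjInv_eq hg b, ← Function.surjInv_eq hg c, hfg _ _ hbc]
  have hrange : range (fun b => f (Function.surjInv hg b)) = range f := by
    refine eq_of_subset_of_ncard_le (range_comp_subset_range _ f) (hcard.trans_eq ?_) hfin
    rw [← image_univ, ncard_image_of_injective _ hinj, ncard_univ]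
  have hsection : ∀ k, f k = f (Function.surjInv hg (g k)) := fun k => by
    obtain ⟨b, hb⟩ : f k ∈ range fun b => f (Function.surjInv hg b) := hrange ▸ mem_range_self k
    rw [hfg _ _ hb.symm, Function.surjInv_eq hg b, ← hb]
  rw [hsection i, hsection j, h]

/-- The residue modulo `q` and the letter at the hole take `2q` values together, so these values
determine the word of length `q`. -/
lemma Recognizes.sameWord_of_hole_eq (hx : LowComplexity x) (h : Recognizes x q q)
    (hletter : ∀ v, ∃ n ≥ q, n % q = a ∧ x n = v) {m m' i : ℕ} (hm : m % q = m' % q) (hi : i < q)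
    (hia : (m + i) % q = a) (hmi : x (m + i) = x (m' + i)) : SameWord x q m m' := by
  have hq : 0 < q := Nat.zero_lt_of_lt hi
  choose j hj hja using fun n => exists_lt_add_mod_eq (hia ▸ Nat.mod_lt (m + i) hq) n
  have hj_congr : ∀ {k n}, k % q = n % q → j k = j n := fun {k n} hkn =>
    eq_of_add_mod_eq (m := n) (hj k) (hj n) <| by
      rw [hja n, ← hja k, Nat.add_mod, ← hkn, ← Nat.add_mod]
  let g : ℕ → Fin q × Fin 2 := fun n => (⟨n % q, Nat.mod_lt n hq⟩, x (n + j n))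
  have hgiff : ∀ k n, g k = g n ↔ k % q = n % q ∧ x (k + j k) = x (n + j n) := fun k n => by
    simp only [g, Prod.mk.injEq, Fin.mk.injEq]
  have hsurj : Function.Surjective g := by
    rintro ⟨⟨r, hr⟩, v⟩
    obtain ⟨n, hn, hna, hnv⟩ := hletter v
    have hcancel : n - j r + j r = n := Nat.sub_add_cancel ((hj r).le.trans hn)
    have hmod : (n - j r) % q = r % q := Nat.ModEq.add_right_cancel' (j r)
      ((congrArg (· % q) hcancel).trans (hna.trans (hja r).symm))
    refine ⟨n - j r, Prod.ext (Fin.ext (hmod.trans (Nat.mod_eq_of_lt hr))) ?_⟩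
    change x (n - j r + j (n - j r)) = v
    rw [hj_congr hmod, hcancel, hnv]
  refine patternAt_eq_iff.mp (eq_of_ncard_range_le (fun k n hkn => ?_) hsurj (toFinite _) ?_
    ((hgiff m m').mpr ⟨hm, ?_⟩))
  · have he : SameWord x q k n := patternAt_eq_iff.mp hkn
    have hmod := h k n he
    exact (hgiff k n).mpr ⟨hmod, hj_congr hmod ▸ sameWord_iff.mp he (j k) (hj k)⟩
  · rw [← patLang_eq_range]
    refine (hx _ (Finset.nonempty_range_iff.mpr hq.ne')).trans_eq ?_
    rw [Finset.card_range, Nat.card_eq_fintype_card, Fintype.card_prod, Fintype.card_fin,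
      Fintype.card_fin, mul_comm]
  · rw [← hj_congr hm, eq_of_add_mod_eq (hj m) hi ((hja m).trans hia.symm), hmi]

/-- A function which takes two values only is determined by each nonconstant function which it
determines. -/
lemma eq_of_forall_imp_eq {S : Set ℕ} {u w : ℕ → Fin 2}
    (huw : ∀ m ∈ S, ∀ n ∈ S, u m = u n → w m = w n) (hw : ∀ v, ∃ n ∈ S, w n ≠ v) {m n : ℕ}
    (hm : m ∈ S) (hn : n ∈ S) (h : w m = w n) : u m = u n := by
  by_contra hne
  obtain ⟨k, hk, hkm⟩ := hw (w m)
  by_cases hku : u k = u m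
  · exact hkm (huw k hk m hm hku)
  · exact hkm ((huw k hk n hn (eq_of_ne_of_ne hku (Ne.symm hne))).trans h.symm)

/-- Both letters determine the one at distance `δ` behind the hole: `x m` determines the word of
length `q` at `m`, and `x (m + q)` the one at `m + 1`. -/
lemma Recognizes.eq_iff_add_eq (hx : LowComplexity x) (h : Recognizes x q q)
    (hletter : ∀ v, ∃ n ≥ q, n % q = a ∧ x n = v) {δ : ℕ} (hδ0 : 0 < δ) (hδ : δ < q)
    (hvary : ∀ v, ∃ n, n % q = a ∧ x (n + δ) ≠ v) {m n : ℕ} (hm : m % q = a) (hn : n % q = a) :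
    x m = x n ↔ x (m + q) = x (n + q) := by
  have hmod : ∀ {m n}, m % q = a → n % q = a → ∀ i, (m + i) % q = (n + i) % q :=
    fun hm hn i => by rw [Nat.add_mod, hm, ← hn, ← Nat.add_mod]
  have hleft : ∀ m, m % q = a → ∀ n, n % q = a → x m = x n → x (m + δ) = x (n + δ) :=
    fun m hm n hn he => sameWord_iff.mp
      (h.sameWord_of_hole_eq hx hletter (i := 0) (hmod hm hn 0) (by omega) hm he) δ hδ
  have hright : ∀ m, m % q = a → ∀ n, n % q = a → x (m + q) = x (n + q) →
      x (m + δ) = x (n + δ) := by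
    intro m hm n hn he
    have hend : ∀ k, k + 1 + (q - 1) = k + q := fun k => by omega
    have hword : SameWord x q (m + 1) (n + 1) :=
      h.sameWord_of_hole_eq hx hletter (i := q - 1) (hmod hm hn 1) (by omega)
        (by rw [hend, Nat.add_mod_right, hm]) (by rw [hend, hend, he])
    have := sameWord_iff.mp hword (δ - 1) (by omega)
    rwa [add_assoc, add_assoc, Nat.add_sub_cancel' (by omega)] at this
  let S : Set ℕ := {m | m % q = a}
  exact ⟨fun he => eq_of_forall_imp_eq (S := S) hright hvary hm hn (hleft m hm n hn he),
    fun he => eq_of_forall_imp_eq (S := S) hleft hvary hm hn (hright m hm n hn he)⟩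

/-- If a letter off the hole varied, then the letters at the holes would repeat or alternate. -/
lemma Recognizes.exists_oneHole_of_self (hx : Tame x) (hq : 1 ≤ q) (h : Recognizes x q q) :
    ∃ a, OneHole x q a := by
  have hrec := hx.uniformlyRecurrent.recurrent
  obtain ⟨a, ha, P, hP, hper⟩ := hx.exists_periodic_holed hq h
  refine ⟨a, ha, ?_, q, h⟩
  by_contra! hne
  obtain ⟨m₀, hm₀, hchange⟩ := hne
  have hletter : ∀ v, ∃ n ≥ q, n % q = a ∧ x n = v := by
    obtain ⟨m, rfl, hm⟩ := hx.exists_ne_of_periodic_holed hP hper hq dvd_rfl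
    exact fun v => h.exists_ge_letter hrec hq hm v q
  obtain ⟨δ, hδ, hδm⟩ := exists_lt_add_mod_eq (Nat.mod_lt m₀ hq) a
  have hδ0 : δ ≠ 0 := by
    rintro rfl
    exact hm₀ (hδm.symm.trans (Nat.mod_eq_of_lt ha))
  have hvary : ∀ v, ∃ n, n % q = a ∧ x (n + δ) ≠ v := by
    intro v
    obtain ⟨w, hw⟩ := exists_ne v
    obtain ⟨n, hn, hnm, hnw⟩ := h.exists_ge_letter hrec hq hchange w q
    have hcancel : n - δ + δ = n := Nat.sub_add_cancel (hδ.le.trans hn)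
    refine ⟨n - δ, ?_, by rw [hcancel, hnw]; exact hw⟩
    refine Eq.trans (Nat.ModEq.add_right_cancel' δ (b := a) ?_) (Nat.mod_eq_of_lt ha)
    exact (congrArg (· % q) hcancel).trans (hnm.trans hδm.symm)
  obtain ⟨m, hm, hm2⟩ := hx.exists_ne_of_periodic_holed hP hper (g := q + q) (by omega)
    (dvd_add dvd_rfl dvd_rfl)
  have := h.eq_iff_add_eq hx.lowComplexity hletter (Nat.pos_of_ne_zero hδ0) hδ hvary hm
    (n := m + q) (by rw [Nat.add_mod_right, hm])
  rw [add_assoc] at this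
  omega

lemma Recognizes.exists_oneHole (hx : Tame x) {q : ℕ} (hq : 1 ≤ q) (h : Recognizes x q N) :
    ∃ Q a, q ∣ Q ∧ OneHole x Q a := by
  by_cases hN : N ≤ q
  · obtain ⟨a, ha⟩ := (h.mono hN).exists_oneHole_of_self hx hq
    exact ⟨q, a, dvd_rfl, ha⟩
  rcases h.exists_oneHole_or_lt hx hq with ⟨a, ha⟩ | ⟨q', hdvd, hlt, h'⟩
  · exact ⟨q, a, dvd_rfl, ha⟩
  rcases le_total q' N with hq' | hq'
  · rw [max_eq_left hq'] at h'
    obtain ⟨Q, a, hQ, ha⟩ := exists_oneHole hx (hq.trans hlt.le) h'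
    exact ⟨Q, a, hdvd.trans hQ, ha⟩
  · rw [max_eq_right hq'] at h'
    obtain ⟨a, ha⟩ := h'.exists_oneHole_of_self hx (hq.trans hlt.le)
    exact ⟨q', a, hdvd, ha⟩
termination_by N - q

end OneHole

section HoleSeq

variable {x : Seq2} {Q a : ℕ}

/-- The letters of `x` along the class of `a` modulo `Q`. -/
def holeSeq (x : Seq2) (Q a : ℕ) : Seq2 := fun j => x (a + Q * j)

lemma holeSeq_add (x : Seq2) (Q a j s : ℕ) : holeSeq x Q a (j + s) = x (a + Q * j + Q * s) := by
  rw [holeSeq, mul_add, add_assoc]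

lemma LowComplexity.ncard_le_of_forall_exists (hx : LowComplexity x) {W : Finset ℕ}
    (hW : W.Nonempty) {S : Set (W → Fin 2)} (f : ℕ → ℕ)
    (h : ∀ w ∈ S, ∃ m, ∀ s : W, w s = x (m + f s)) : S.ncard ≤ 2 * W.card := by
  let e : (W.image f → Fin 2) → W → Fin 2 :=
    fun w s => w ⟨f s, Finset.mem_image_of_mem f s.2⟩
  have hsub : S ⊆ e '' patLang x (W.image f) := fun w hw =>
    let ⟨m, hm⟩ := h w hw
    ⟨patternAt x (W.image f) m, ⟨m, fun _ => rfl⟩, funext fun s => (hm s).symm⟩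
  calc S.ncard ≤ (patLang x (W.image f)).ncard :=
        (ncard_le_ncard hsub (toFinite _)).trans (ncard_image_le (toFinite _))
    _ ≤ 2 * (W.image f).card := hx _ (hW.image f)
    _ ≤ 2 * W.card := Nat.mul_le_mul_left 2 Finset.card_image_le

namespace OneHole

lemma uniformlyRecurrent_holeSeq (h : OneHole x Q a) (hx : UniformlyRecurrent x) :
    UniformlyRecurrent (holeSeq x Q a) := by
  have hQ : 1 ≤ Q := Nat.one_le_of_lt h.lt
  obtain ⟨N, hN⟩ := h.recognizes
  intro L
  obtain ⟨g, hg⟩ := hx (max N (a + Q * L + 1))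
  refine ⟨g, fun n => ?_⟩
  obtain ⟨M, ⟨hM, hword⟩, hnM, hMg⟩ := hg (Q * n)
  have hmod : (0 + M) % Q = 0 % Q := (hN 0 (0 + M) <| sameWord_iff.mpr fun i hi => by
    simpa only [zero_add] using hword i (hi.trans_le (le_max_left _ _))).symm
  obtain ⟨M', rfl⟩ := dvd_of_add_mod_eq hmod
  refine ⟨M', ⟨Nat.pos_of_mul_pos_left hM, fun i hi => ?_⟩, Nat.le_of_mul_le_mul_left hnM hQ,
    Nat.lt_of_mul_lt_mul_left (hMg.trans_le ?_)⟩
  · have hQi : Q * i ≤ Q * L := Nat.mul_le_mul_left Q hi.le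
    rw [holeSeq_add, add_right_comm, add_comm]
    exact hword (a + Q * i) (lt_of_lt_of_le (by omega) (le_max_right _ _))
  · rw [mul_add]
    exact Nat.add_le_add_left (Nat.le_mul_of_pos_left g hQ) _

lemma add_mul_eq (h : OneHole x Q a) {m : ℕ} (hm : m % Q ≠ a) (k : ℕ) : x (m + k * Q) = x m :=
  (imp_add_mul_of_imp_add (b := fun n => n % Q ≠ a ∧ x n = x m)
    (fun n hn => ⟨by rw [Nat.add_mod_right]; exact hn.1, (h.add_eq n hn.1).trans hn.2⟩)
    ⟨hm, rfl⟩ k).2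

lemma tame_holeSeq (h : OneHole x Q a) (hx : Tame x) : Tame (holeSeq x Q a) where
  uniformlyRecurrent := h.uniformlyRecurrent_holeSeq hx.uniformlyRecurrent
  aperiodic g hg := by
    obtain ⟨m, hm⟩ := hx.aperiodic (Q * g) (Nat.mul_pos (Nat.zero_lt_of_lt h.lt) hg)
    have hma : m % Q = a := by
      by_contra hne
      exact hm (by rw [mul_comm, h.add_mul_eq hne])
    refine ⟨m / Q, ?_⟩
    rwa [holeSeq_add, holeSeq, ← hma, Nat.mod_add_div]
  lowComplexity W hW := hx.lowComplexity.ncard_le_of_forall_exists hW (Q * ·) fun _ ⟨j, hj⟩ =>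
    ⟨a + Q * j, fun s => (hj s).trans (holeSeq_add x Q a j s)⟩

/-- The hole of a window is where its letters repeat the word of `holeSeq x Q a`. -/
lemma exists_recognizes_mul (h : OneHole x Q a) {q N' : ℕ}
    (hq : Recognizes (holeSeq x Q a) q N') : ∃ N, Recognizes x (Q * q) N := by
  obtain ⟨N, hN⟩ := h.recognizes
  refine ⟨max N (Q * (N' + 1)), fun m n he => ?_⟩
  have hmod := hN m n (he.mono (le_max_left _ _))
  obtain ⟨i, hi, hmi⟩ := exists_lt_add_mod_eq h.lt m
  have hni : (n + i) % Q = a := by rw [← hmi, Nat.add_mod, ← hmod, ← Nat.add_mod]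
  have hm := hmi ▸ Nat.mod_add_div (m + i) Q
  have hn := hni ▸ Nat.mod_add_div (n + i) Q
  have hword : SameWord (holeSeq x Q a) N' ((m + i) / Q) ((n + i) / Q) := by
    refine sameWord_iff.mpr fun s hs => ?_
    rw [holeSeq_add, holeSeq_add, hm, hn, add_assoc, add_assoc]
    refine sameWord_iff.mp he _ (lt_of_lt_of_le ?_ (le_max_right _ _))
    have : Q * s ≤ Q * N' := Nat.mul_le_mul_left Q hs.le
    rw [mul_add]
    omega
  have : m + i ≡ n + i [MOD Q * q] := by
    rw [← hm, ← hn]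
    exact Nat.ModEq.add_left a (Nat.ModEq.mul_left' Q (hq _ _ hword))
  exact Nat.ModEq.add_right_cancel' i this

end OneHole

end HoleSeq

section FullWindows

variable {x : Seq2} {W : Finset ℕ} {α p η : ℝ} {a b : ℕ}

/-- The window `W` attains the maximal number of patterns of a sequence of low complexity. -/
def IsFull (x : Seq2) (W : Finset ℕ) : Prop := 2 * W.card ≤ (patLang x W).ncard

lemma IsFull.insert_of_splits (hW : IsFull x W) {s m n : ℕ} (hm : Splits x W s m)
    (hn : Splits x W s n) (hmn : ¬ Agree x W m n) : IsFull x (insert s W) := by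
  have : 2 ≤ (patternAt x W '' {m | Splits x W s m}).ncard :=
    (one_lt_ncard (toFinite _)).mpr
      ⟨_, ⟨m, hm, rfl⟩, _, ⟨n, hn, rfl⟩, fun h => hmn (patternAt_eq_iff.mp h)⟩
  have := Finset.card_insert_le s W
  rw [IsFull] at *
  rw [ncard_patLang_insert]
  omega

namespace Tame

lemma isFull_singleton (hx : Tame x) : IsFull x {0} := by
  obtain ⟨m, -, hm, -⟩ := hx.exists_ge_leave le_rfl 0 0 0
  obtain ⟨n, -, hn, -⟩ := hx.exists_ge_leave le_rfl 1 0 0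
  rw [IsFull, Finset.card_singleton, patLang_eq_range, mul_one]
  refine (one_lt_ncard (toFinite _)).mpr
    ⟨_, mem_range_self m, _, mem_range_self n, fun h => ?_⟩
  have := patternAt_eq_iff.mp h 0 (by simp)
  omega

/-- The offset `b + t` splits the patterns in which the letter at `b` is lost. One of `a` and `b`
leads the other, so the letter lost at `b` can be read off at `a`. -/
lemma exists_isFull_insert (hx : Tame x) (hmin : TotallyMinimal x) (hW : IsFull x W) (ha : a ∈ W)
    (hab : a ≠ b) (hcommon : ∀ v, ∃ m, x (m + a) = v ∧ x (m + b) = v) :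
    ∃ V, ∀ t ≥ 1, IsReturn x V t → IsFull x (insert (b + t) W) := by
  obtain ⟨V, hWV, hV⟩ := hx.lowComplexity.exists_saturated_superset (insert b W)
  have hbV : b ∈ V := hWV (Finset.mem_insert_self _ _)
  have hWV' : W ⊆ V := (Finset.subset_insert _ _).trans hWV
  refine ⟨V, fun t ht hr => ?_⟩
  have hlead := hx.lead_or_lead hmin hV ht hr (hWV' ha) hbV hab hcommon
  obtain ⟨m, -, hm, hmt⟩ := hx.exists_ge_leave ht 0 b 0
  obtain ⟨n, -, hn, hnt⟩ := hx.exists_ge_leave ht 1 b 0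
  have hsplits : ∀ k, x (k + b) ≠ x (k + b + t) → Splits x W (b + t) k := fun k hk =>
    let ⟨k', hkk', hk'⟩ := hr.splits hbV hk
    ⟨k', hkk'.mono hWV', hk'⟩
  refine hW.insert_of_splits (hsplits m (hm ▸ hmt.symm)) (hsplits n (hn ▸ hnt.symm)) fun he => ?_
  have hmn := he a ha
  rcases hlead with hL | hL
  · have hma := (hL m).2 (hm ▸ hmt.symm)
    have hna := (hL n).2 (hn ▸ hnt.symm)
    omega
  · have hma := (hL m).1 (hm ▸ hmt.symm)
    have hna := (hL n).1 (hn ▸ hnt.symm)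
    omega

lemma exists_isFull_isLift (hx : Tame x) (hmin : TotallyMinimal x)
    (hρ : IsRotationNorm hx.shiftNorm α p η) {t : ℕ} {d : ℝ} (ht : 1 ≤ t) (hd : IsLift α t d)
    (hd0 : 0 < d) (hcommon : ∀ a v, ∃ m, x (m + a) = v ∧ x (m + (a + t)) = v) (K : ℕ) :
    ∃ W, IsFull x W ∧ ∃ s ∈ W, ∃ u, IsLift α s u ∧ K * d ≤ u ∧
      ∀ y ∈ Icc 0 u, ∃ s' ∈ W, ∃ u', IsLift α s' u' ∧ |u' - y| < 2 * d := by
  induction K with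
  | zero =>
    have hzero : IsLift α 0 0 := ⟨0, by simp⟩
    refine ⟨{0}, hx.isFull_singleton, 0, by simp, 0, hzero, by simp, fun y hy => ?_⟩
    obtain rfl : y = 0 := le_antisymm hy.2 hy.1
    exact ⟨0, by simp, 0, hzero, by simpa using hd0⟩
  | succ K ih =>
    obtain ⟨W, hW, s, hs, u, hu, hKu, hcover⟩ := ih
    obtain ⟨V, hV⟩ := hx.exists_isFull_insert hmin hW hs (b := s + t) (by omega) (hcommon s)
    obtain ⟨t', ht', τ, hr, hτ, hτ0, hτd⟩ := hx.exists_isReturn_isLift hρ V hd0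
    refine ⟨_, hV t' ht' hr, s + t + t', Finset.mem_insert_self _ _, u + d + τ,
      (hu.add hd).add hτ, by push_cast; linarith, fun y hy => ?_⟩
    rcases le_or_gt y u with hyu | huy
    · obtain ⟨s', hs', h⟩ := hcover y ⟨hy.1, hyu⟩
      exact ⟨s', Finset.mem_insert_of_mem hs', h⟩
    · refine ⟨s, Finset.mem_insert_of_mem hs, u, hu, ?_⟩
      rw [abs_lt]
      constructor <;> linarith [hy.2]

/-- If the multiples of `α` by the offsets in `W` are dense enough, every translate of `W` meets the
arc on which the letter differs from `c`. -/
lemma exists_isFull_forall_exists_ne (hx : Tame x) (hmin : TotallyMinimal x)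
    (hρ : IsRotationNorm hx.shiftNorm α p η) (c : Fin 2) :
    ∃ W : Finset ℕ, W.Nonempty ∧ IsFull x W ∧ ∀ m, ∃ s ∈ W, x (m + s) ≠ c := by
  obtain ⟨v, hv⟩ := exists_ne c
  obtain ⟨r, r', hr, hIoo⟩ := hx.exists_Ioo_forall_isLift hρ v
  obtain ⟨κ, hκ, hclose⟩ := hx.exists_common_letter_of_mismatch_lt
  obtain ⟨t, ht, d, -, hd, hd0, hlt⟩ := hx.exists_isReturn_isLift hρ ∅ (ε := min ((r' - r) / 4)
    (min (κ / p) η)) (lt_min (by linarith) (lt_min (div_pos hκ hρ.scale_pos) hρ.radius_pos))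
  obtain ⟨hdr, hdκ, hdη⟩ : d < (r' - r) / 4 ∧ d < κ / p ∧ d < η := by
    simpa only [lt_min_iff] using hlt
  have hcommon : ∀ a v, ∃ m, x (m + a) = v ∧ x (m + (a + t)) = v := by
    intro a v
    have ha : IsLift α a (a * α) := .mul_self α a
    have habs : |a * α - (a * α + d)| = d := by
      rw [sub_add_cancel_left, abs_neg, abs_of_pos hd0]
    have hmis : mismatch x a (a + t) < κ := by
      rw [hx.mismatch_eq_of_isLift hρ ha (ha.add hd) (habs.trans_lt hdη), habs, mul_comm]
      exact (lt_div_iff₀ hρ.scale_pos).mp hdκ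
    obtain ⟨m, hm, hm', -⟩ := hclose a (a + t) (a + t) hmis hmis v
    exact ⟨m, hm, hm'⟩
  obtain ⟨K, hK⟩ := exists_nat_ge (1 / d)
  rw [div_le_iff₀ hd0] at hK
  obtain ⟨W, hW, s, hs, u, -, hKu, hcover⟩ := hx.exists_isFull_isLift hmin hρ ht hd hd0 hcommon K
  refine ⟨W, ⟨s, hs⟩, hW, fun m => ?_⟩
  let y := (r + r') / 2 - m * α
  obtain ⟨s', hs', u', hu', hlt'⟩ := hcover (Int.fract y)
    ⟨Int.fract_nonneg y, (Int.fract_lt_one y).le.trans (hK.trans hKu)⟩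
  refine ⟨s', hs', ?_⟩
  have hlift := ((IsLift.mul_self α m).add hu').add_intCast ⌊y⌋
  have hy : ⌊y⌋ + Int.fract y = (r + r') / 2 - m * α := Int.floor_add_fract y
  rw [abs_lt] at hlt'
  rw [hIoo _ _ ⟨by linarith, by linarith⟩ hlift]
  exact hv

end Tame

end FullWindows

section Toeplitz

variable {x : Seq2} {Q a : ℕ}

lemma Tame.exists_isRotationNorm (hx : Tame x) (hmin : TotallyMinimal x) :
    ∃ α p η, IsRotationNorm hx.shiftNorm α p η := by
  obtain ⟨κ, hκ, hlin⟩ := hx.exists_locallyLinear_shiftNorm hmin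
  exact _root_.exists_isRotationNorm hκ hlin (fun _ => hx.exists_shiftNorm_lt)
    fun _ => hx.closure_shiftNorm_lt hmin

namespace OneHole

/-- Spread out by the factor `Q`, a full window of a totally minimal `holeSeq x Q a` would show one
more pattern in `x`, the constant one read along another class. -/
lemma not_totallyMinimal_holeSeq (h : OneHole x Q a) (hx : Tame x) (hQ : 2 ≤ Q) :
    ¬ TotallyMinimal (holeSeq x Q a) := by
  intro hmin
  have hhole := h.tame_holeSeq hx
  obtain ⟨b, hb, hba⟩ : ∃ b < Q, b ≠ a := by
    by_cases ha : a = 0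
    · exact ⟨1, hQ, by omega⟩
    · exact ⟨0, by omega, Ne.symm ha⟩
  obtain ⟨α, p, η, hρ⟩ := hhole.exists_isRotationNorm hmin
  obtain ⟨W, hW, hfull, hne⟩ := hhole.exists_isFull_forall_exists_ne hmin hρ (x b)
  have hnotMem : (fun _ => x b) ∉ patLang (holeSeq x Q a) W := fun ⟨m, hm⟩ =>
    let ⟨s, hs, hne⟩ := hne m
    hne (hm ⟨s, hs⟩).symm
  have hle : (insert (fun _ => x b) (patLang (holeSeq x Q a) W)).ncard ≤ 2 * W.card := by
    refine hx.lowComplexity.ncard_le_of_forall_exists hW (Q * ·) fun w hw => ?_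
    obtain rfl | ⟨j, hj⟩ := hw
    · refine ⟨b, fun s => ?_⟩
      rw [mul_comm, h.add_mul_eq (by rwa [Nat.mod_eq_of_lt hb])]
    · exact ⟨a + Q * j, fun s => (hj s).trans (holeSeq_add x Q a j s)⟩
  rw [ncard_insert_of_notMem hnotMem (toFinite _)] at hle
  rw [IsFull] at hfull
  omega

lemma exists_lt (h : OneHole x Q a) (hx : Tame x) (hQ : 2 ≤ Q) :
    ∃ Q' a', Q ∣ Q' ∧ Q < Q' ∧ OneHole x Q' a' := by
  obtain ⟨q, N, hq, hrec⟩ := exists_recognizes_of_not_totallyMinimal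
    (h.tame_holeSeq hx).uniformlyRecurrent.recurrent (h.not_totallyMinimal_holeSeq hx hQ)
  obtain ⟨N', hrec'⟩ := h.exists_recognizes_mul hrec
  obtain ⟨Q', a', hdvd, h'⟩ := hrec'.exists_oneHole hx (Nat.mul_pos (by omega) (by omega))
  refine ⟨Q', a', (dvd_mul_right Q q).trans hdvd, ?_, h'⟩
  calc Q < Q * q := lt_mul_of_one_lt_right (by omega) hq
    _ ≤ Q' := Nat.le_of_dvd (Nat.zero_lt_of_lt h'.lt) hdvd

lemma eq_of_mod_eq (h : OneHole x Q a) {m n : ℕ} (hm : m % Q ≠ a) (hmn : m % Q = n % Q) :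
    x m = x n := by
  have hmod : ∀ k, k % Q ≠ a → x k = x (k % Q) := fun k hk => by
    rw [← h.add_mul_eq (m := k % Q) (by rwa [Nat.mod_mod]) (k / Q), Nat.mod_add_div']
  rw [hmod m hm, hmn, hmod n (hmn ▸ hm)]

lemma exists_ge_add_ne (h : OneHole x Q a) (hx : Tame x) (B : ℕ) :
    ∃ m ≥ B, m % Q = a ∧ x (m + Q) ≠ x m := by
  obtain ⟨m, hmB, hm, hmQ⟩ := hx.exists_ge_leave (Nat.one_le_of_lt h.lt) 0 0 B
  rw [add_zero] at hm hmQ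
  rw [← hm] at hmQ
  exact ⟨m, hmB, not_imp_comm.mp (h.add_eq m) hmQ, hmQ⟩

lemma ncard_nonconstant_eq_one (h : OneHole x Q a) (hx : Tame x) (c : ℕ) :
    {j | j < Q ∧ ∃ m₁ m₂, m₁ % Q = j ∧ m₂ % Q = j ∧ x (c + m₁) ≠ x (c + m₂)}.ncard = 1 := by
  have hQ : 0 < Q := Nat.zero_lt_of_lt h.lt
  obtain ⟨j₀, hj₀, hj₀a⟩ := exists_lt_add_mod_eq h.lt c
  refine ncard_eq_one.mpr ⟨j₀, eq_singleton_iff_unique_mem.mpr ⟨⟨hj₀, ?_⟩, ?_⟩⟩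
  · obtain ⟨m, hm, hma, hne⟩ := h.exists_ge_add_ne hx c
    obtain ⟨n, rfl⟩ := Nat.exists_eq_add_of_le hm
    have hn : n % Q = j₀ := eq_of_add_mod_eq (m := c) (Nat.mod_lt _ hQ) hj₀ <| by
      rw [Nat.add_mod_mod, hma, hj₀a]
    exact ⟨n + Q, n, by rwa [Nat.add_mod_right], hn, by rwa [← add_assoc]⟩
  · rintro j ⟨hj, m₁, m₂, hm₁, hm₂, hne⟩
    refine eq_of_add_mod_eq hj hj₀ (m := c) (.trans ?_ hj₀a.symm)
    by_contra hja
    refine hne (h.eq_of_mod_eq ?_ ?_)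
    · rwa [← Nat.add_mod_mod, hm₁]
    · rw [← Nat.add_mod_mod, hm₁, ← hm₂, Nat.add_mod_mod]

end OneHole

/-- At most one position lies in every hole. -/
lemma exists_forall_ge_exists_mod_ne {nk : ℕ → ℕ} (hnk : StrictMono nk) (a : ℕ → ℕ) :
    ∃ c, ∀ n ≥ c, ∃ k, n % nk k ≠ a k := by
  by_contra! h
  obtain ⟨m, -, hm⟩ := h 0
  obtain ⟨n, hmn, hn⟩ := h (m + 1)
  have hn_lt : n < nk (n + 1) := hnk.le_apply
  have : m % nk (n + 1) = n % nk (n + 1) := (hm _).trans (hn _).symm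
  rw [Nat.mod_eq_of_lt hn_lt, Nat.mod_eq_of_lt (by omega)] at this
  omega

lemma Recurrent.mem_orbitClosure_shift (hx : Recurrent x) (c : ℕ) :
    x ∈ orbitClosure fun n => x (c + n) := by
  refine mem_orbitClosure_iff.mpr fun L => ?_
  obtain ⟨t, ht, -, hword⟩ := hx.exists_dvd_sameWord L c le_rfl
  refine ⟨t - c, fun i hi => ?_⟩
  rw [← add_assoc, Nat.add_sub_cancel' ht, ← sameWord_iff.mp hword i hi, zero_add]

namespace Tame

lemma exists_seq_oneHole (hx : Tame x) (h : ¬ TotallyMinimal x) :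
    ∃ nk a : ℕ → ℕ, (∀ k, nk k ∣ nk (k + 1)) ∧ StrictMono nk ∧ ∀ k, OneHole x (nk k) (a k) := by
  obtain ⟨q, N, hq, hrec⟩ :=
    exists_recognizes_of_not_totallyMinimal hx.uniformlyRecurrent.recurrent h
  obtain ⟨Q₀, a₀, hdvd₀, h₀⟩ := hrec.exists_oneHole hx (by omega)
  have hQ₀ : 2 ≤ Q₀ := hq.trans (Nat.le_of_dvd (Nat.zero_lt_of_lt h₀.lt) hdvd₀)
  have hnext : ∀ Q : {Q : ℕ // 2 ≤ Q ∧ ∃ a, OneHole x Q a},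
      ∃ Q' : {Q : ℕ // 2 ≤ Q ∧ ∃ a, OneHole x Q a}, Q.1 ∣ Q'.1 ∧ Q.1 < Q'.1 := by
    rintro ⟨Q, hQ, a, hQa⟩
    obtain ⟨Q', a', hdvd, hlt, h'⟩ := hQa.exists_lt hx hQ
    exact ⟨⟨Q', by omega, a', h'⟩, hdvd, hlt⟩
  choose next hdvd hlt using hnext
  let level : ℕ → {Q : ℕ // 2 ≤ Q ∧ ∃ a, OneHole x Q a} :=
    fun k => next^[k] ⟨Q₀, hQ₀, a₀, h₀⟩
  have hlevel : ∀ k, level (k + 1) = next (level k) := fun k =>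
    Function.iterate_succ_apply' next k _
  choose a ha using fun k => (level k).2.2
  refine ⟨fun k => level k, a, fun k => ?_, strictMono_nat_of_lt_succ fun k => ?_, ha⟩
  · simpa only [hlevel] using hdvd (level k)
  · simpa only [hlevel] using hlt (level k)

theorem exists_mHoleToeplitz (hx : Tame x) (h : ¬ TotallyMinimal x) :
    ∃ z, MHoleToeplitz 1 z ∧ x ∈ orbitClosure z := by
  obtain ⟨nk, a, hdvd, hnk, hhole⟩ := hx.exists_seq_oneHole h
  obtain ⟨c, hc⟩ := exists_forall_ge_exists_mod_ne hnk a
  refine ⟨fun n => x (c + n), ⟨nk, ⟨fun k => ⟨?_, hdvd k, hnk k.lt_succ_self⟩, fun n => ?_⟩,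
    fun k => (hhole k).ncard_nonconstant_eq_one hx c⟩,
    hx.uniformlyRecurrent.recurrent.mem_orbitClosure_shift c⟩
  · exact Nat.one_le_of_lt (hhole k).lt
  · obtain ⟨k, hk⟩ := hc (c + n) (Nat.le_add_right c n)
    exact ⟨k, fun m hm => ((hhole k).eq_of_mod_eq hk (Nat.ModEq.add_left c hm.symm)).symm⟩

end Tame

end Toeplitz

/-- Theorem A, with `nearly simple Toeplitz` weakened to `1-hole Toeplitz`:
a recurrent pattern Sturmian sequence is uniformly recurrent and is either a simple
circle rotation coding sequence or belongs to the orbit closure of a 1-hole Toeplitz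
sequence. -/
theorem stmt4 (x : Seq2) (hrec : Recurrent x) (hps : PatternSturmian x) :
    UniformlyRecurrent x ∧
      (SimpleCircleCoding x ∨ ∃ z : Seq2, MHoleToeplitz 1 z ∧ x ∈ orbitClosure z) := by
  have hx : Tame x := hps.tame hrec
  refine ⟨hx.uniformlyRecurrent, ?_⟩
  by_cases hmin : TotallyMinimal x
  · obtain ⟨α, p, η, hρ⟩ := hx.exists_isRotationNorm hmin
    exact .inl (hx.simpleCircleCoding hρ)
  · exact .inr (hx.exists_mHoleToeplitz hmin)
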